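/- arXiv:1307.5019 — 2 statements merged into one kernel-verified Lean document; each statement's English description precedes it below -/
import Mathlib

section
/- Let λ > 0 and 0 < α < 1, and let f ∈ C^α_+ satisfy ∫₀^∞ |f(y)|/(1+y)^{1+λ} dy < ∞. Then the function v(x,t) := ∫₀^∞ P_t^λ(x,y) f(y) dy is well defined on ℝ₊ × (0,∞), is twice continuously differentiable there, satisfies the Bessel harmonic extension equation ∂_t² v(x,t) + ∂_x² v(x,t) − (λ(λ−1)/x²) v(x,t) = 0 for all x > 0 and t > 0, and attains the boundary datum: lim_{t→0⁺} v(x,t) = f(x) for every x > 0. -/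
open Real MeasureTheory Set Filter

noncomputable section

/-- The modified Bessel function of the first kind `I_ν(z)`. -/
def besselI (ν z : ℝ) : ℝ :=
  ∑' k : ℕ, (z / 2) ^ (2 * (k : ℝ) + ν) / ((Nat.factorial k : ℝ) * Real.Gamma ((k : ℝ) + ν + 1))

/-- The Bessel heat kernel `W_t^λ(x,y)`. -/
def besselHeatKernel (lam t x y : ℝ) : ℝ :=
  Real.sqrt (x * y) / (2 * t) * besselI (lam - 1 / 2) (x * y / (2 * t)) *
    Real.exp (-(x ^ 2 + y ^ 2) / (4 * t))

/-- The Bessel–Poisson kernel `P_t^λ(x,y)`, obtained by subordination. -/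
def besselPoissonKernel (lam t x y : ℝ) : ℝ :=
  t / (2 * Real.sqrt Real.pi) *
    ∫ s in Set.Ioi (0 : ℝ),
      s ^ (-(3 : ℝ) / 2) * Real.exp (-t ^ 2 / (4 * s)) * besselHeatKernel lam s x y

/-- The Bessel heat semigroup `W_t^λ u (x)`. -/
def heatSemigroup (lam : ℝ) (u : ℝ → ℝ) (t x : ℝ) : ℝ :=
  ∫ y in Set.Ioi (0 : ℝ), besselHeatKernel lam t x y * u y

/-- The Bessel–Poisson semigroup `P_t^λ f (x)`. -/
def poissonSemigroup (lam : ℝ) (f : ℝ → ℝ) (t x : ℝ) : ℝ :=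
  ∫ y in Set.Ioi (0 : ℝ), besselPoissonKernel lam t x y * f y

/-- The set of Hölder quotients of `f` on `(0,∞)`. -/
def holderRatioSet (α : ℝ) (f : ℝ → ℝ) : Set ℝ :=
  {r | ∃ x y : ℝ, 0 < x ∧ 0 < y ∧ x ≠ y ∧ r = |f x - f y| / |x - y| ^ α}

/-- The set of growth quotients `|f x|/x^α` of `f` on `(0,∞)`. -/
def growthRatioSet (α : ℝ) (f : ℝ → ℝ) : Set ℝ :=
  {r | ∃ x : ℝ, 0 < x ∧ r = |f x| / x ^ α}

/-- Membership in the Hölder space `C^α_+` (equal to `Lip_+` when `α = 1`). -/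
def MemHolderPlus (α : ℝ) (f : ℝ → ℝ) : Prop :=
  ContinuousOn f (Set.Ioi 0) ∧ BddAbove (holderRatioSet α f) ∧ BddAbove (growthRatioSet α f)

/-- The `C^α_+` norm. -/
def holderPlusNorm (α : ℝ) (f : ℝ → ℝ) : ℝ :=
  sSup (holderRatioSet α f) + sSup (growthRatioSet α f)

/-- `Γ(-σ)`, written through the functional equation `Γ(-σ) = Γ(2-σ)/((-σ)(1-σ))`. -/
def gammaNeg (σ : ℝ) : ℝ := Real.Gamma (2 - σ) / (-σ * (1 - σ))

/-- The kernel `K_σ^λ(x,y)`. -/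
def fracKernelK (lam σ x y : ℝ) : ℝ :=
  1 / (-gammaNeg σ) * ∫ t in Set.Ioi (0 : ℝ), besselHeatKernel lam t x y * t ^ (-1 - σ)

/-- `W_t^λ 1 (x)`. -/
def heatOne (lam t x : ℝ) : ℝ := ∫ y in Set.Ioi (0 : ℝ), besselHeatKernel lam t x y

/-- The function `B_σ^λ(x)`. -/
def fracFunB (lam σ x : ℝ) : ℝ :=
  1 / gammaNeg σ * ∫ t in Set.Ioi (0 : ℝ), (heatOne lam t x - 1) * t ^ (-1 - σ)

/-- The integer `m` with `m - 1 ≤ β < m`. -/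
def fracOrder (β : ℝ) : ℕ := Nat.floor β + 1

/-- The Segovia–Wheeden fractional derivative `∂_t^β F(t)`, a complex number. -/
def fracDeriv (β : ℝ) (F : ℝ → ℝ) (t : ℝ) : ℂ :=
  Complex.exp (-(Real.pi * ((fracOrder β : ℝ) - β)) * Complex.I) /
      Complex.ofReal (Real.Gamma ((fracOrder β : ℝ) - β)) *
    Complex.ofReal
      (∫ s in Set.Ioi (0 : ℝ),
        iteratedDeriv (fracOrder β) F (t + s) * s ^ ((fracOrder β : ℝ) - β - 1))

/-- Positive coefficients whose successive ratios tend to `4`. -/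
def RatioFour (c : ℕ → ℝ) : Prop :=
  (∀ k, 0 < c k) ∧ Tendsto (fun k => c (k + 1) / c k) atTop (nhds 4)

/-- The sum of the power series with coefficients `c`. -/
def powerSum (c : ℕ → ℝ) (w : ℝ) : ℝ := ∑' k, c k * w ^ k

/-- The coefficients of the formal derivative. -/
def derivCoef (c : ℕ → ℝ) (k : ℕ) : ℝ := (k + 1) * c (k + 1)

lemma RatioFour.derivCoef {c : ℕ → ℝ} (hc : RatioFour c) : RatioFour (derivCoef c) := by
  refine ⟨fun k => mul_pos (by positivity) (hc.1 _), ?_⟩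
  have h1 : Tendsto (fun k : ℕ => 1 + 1 / ((k : ℝ) + 1)) atTop (nhds (1 + 0)) :=
    tendsto_const_nhds.add tendsto_one_div_add_atTop_nhds_zero_nat
  have h2 := h1.mul ((tendsto_add_atTop_iff_nat 1).2 hc.2)
  rw [add_zero, one_mul] at h2
  refine h2.congr fun k => ?_
  have := (hc.1 (k + 1)).ne'
  simp only [_root_.derivCoef]
  push_cast
  field_simp

lemma RatioFour.summable {c : ℕ → ℝ} (hc : RatioFour c) {w : ℝ} (hw : |w| < 1 / 4) :
    Summable fun k => c k * w ^ k := by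
  rcases eq_or_ne w 0 with rfl | hw0
  · exact summable_of_ne_finset_zero (s := {0}) fun k hk => by
      simp at hk; simp [hk]
  refine summable_of_ratio_test_tendsto_lt_one (l := 4 * |w|) (by linarith)
    (Eventually.of_forall fun k => mul_ne_zero (hc.1 k).ne' (pow_ne_zero _ hw0)) ?_
  refine (hc.2.mul_const |w|).congr fun k => ?_
  have := (hc.1 k).ne'
  have h3 : |w| ≠ 0 := abs_ne_zero.2 hw0
  simp only [norm_mul, norm_pow, Real.norm_eq_abs, abs_of_pos (hc.1 _)]
  field_simp
  ring

lemma RatioFour.hasDerivAt {c : ℕ → ℝ} (hc : RatioFour c) {w : ℝ} (hw : |w| < 1 / 4) :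
    HasDerivAt (powerSum c) (powerSum (_root_.derivCoef c) w) w := by
  obtain ⟨r, hwr, hr⟩ := exists_between hw
  have hr0 : 0 < r := (abs_nonneg w).trans_lt hwr
  have hu : Summable fun k : ℕ => (k : ℝ) * c k * r ^ (k - 1) := by
    rw [← summable_nat_add_iff 1]
    refine (hc.derivCoef.summable (w := r) (by rwa [abs_of_pos hr0])).congr fun k => ?_
    simp [_root_.derivCoef]
  have h := hasDerivAt_tsum_of_isPreconnected (g := fun k w => c k * w ^ k)
    (g' := fun k w => (k : ℝ) * c k * w ^ (k - 1)) (t := Metric.ball 0 r) (y₀ := 0) (y := w) hu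
    Metric.isOpen_ball (convex_ball _ _).isPreconnected
    (fun k y _ => by
      have := ((hasDerivAt_pow k y).const_mul (c k))
      convert! this using 1
      rw [mul_comm (k : ℝ), mul_assoc])
    (fun k y hy => by
      have hy' : |y| ≤ r := by simpa using (mem_ball_zero_iff.1 hy).le
      have : 0 ≤ (k : ℝ) * c k := mul_nonneg (by positivity) (hc.1 k).le
      rw [norm_mul, norm_pow, Real.norm_of_nonneg this, Real.norm_eq_abs]
      gcongr)
    (Metric.mem_ball_self hr0) (hc.summable (by simp))
    (by simpa using hwr)
  have h2 : powerSum (_root_.derivCoef c) w = ∑' k : ℕ, (k : ℝ) * c k * w ^ (k - 1) := by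
    have hs : Summable fun k : ℕ => (k : ℝ) * c k * w ^ (k - 1) := by
      rw [← summable_nat_add_iff 1]
      refine (hc.derivCoef.summable (w := w) hw).congr fun k => ?_
      simp [_root_.derivCoef]
    rw [hs.tsum_eq_zero_add]
    simp [powerSum, _root_.derivCoef]
  rw [h2]
  exact h

lemma RatioFour.contDiffOn {c : ℕ → ℝ} (hc : RatioFour c) (n : ℕ) :
    ContDiffOn ℝ n (powerSum c) (Metric.ball 0 (1 / 4)) := by
  have hb : ∀ w ∈ Metric.ball (0 : ℝ) (1 / 4), |w| < 1 / 4 := fun w hw => by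
    simpa using hw
  induction n generalizing c with
  | zero =>
    exact contDiffOn_zero.2 fun w hw =>
      (hc.hasDerivAt (hb w hw)).continuousAt.continuousWithinAt
  | succ n ih =>
    rw [Nat.cast_add, Nat.cast_one, contDiffOn_succ_iff_deriv_of_isOpen Metric.isOpen_ball]
    refine ⟨fun w hw => (hc.hasDerivAt (hb w hw)).differentiableAt.differentiableWithinAt,
      by simp, ?_⟩
    exact (ih hc.derivCoef).congr fun w hw => (hc.hasDerivAt (hb w hw)).deriv

lemma RatioFour.powerSum_nonneg {c : ℕ → ℝ} (hc : RatioFour c) {w : ℝ} (hw : 0 ≤ w) :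
    0 ≤ powerSum c w :=
  tsum_nonneg fun k => mul_nonneg (hc.1 k).le (pow_nonneg hw k)

lemma RatioFour.powerSum_mono {c : ℕ → ℝ} (hc : RatioFour c) {w z : ℝ} (hw : 0 ≤ w)
    (hwz : w ≤ z) (hz : z < 1 / 4) : powerSum c w ≤ powerSum c z := by
  refine Summable.tsum_le_tsum (fun k => ?_)
    (hc.summable (by rw [abs_of_nonneg hw]; linarith))
    (hc.summable (by rw [abs_of_nonneg (hw.trans hwz)]; linarith))
  have := (hc.1 k).le
  gcongr

/-- The power series coefficients of the Bessel–Poisson kernel. -/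
def poissonCoef (lam : ℝ) (k : ℕ) : ℝ :=
  Real.Gamma (2 * k + lam + 1) / ((Nat.factorial k : ℝ) * Real.Gamma (k + lam + 1 / 2))

lemma poissonCoef_pos {lam : ℝ} (hlam : 0 < lam) (k : ℕ) : 0 < poissonCoef lam k := by
  unfold poissonCoef
  have h1 := Real.Gamma_pos_of_pos (s := 2 * k + lam + 1) (by positivity)
  have h2 := Real.Gamma_pos_of_pos (s := k + lam + 1 / 2) (by positivity)
  positivity

lemma poissonCoef_succ {lam : ℝ} (hlam : 0 < lam) (k : ℕ) :
    poissonCoef lam (k + 1) * ((k + 1) * (k + lam + 1 / 2)) =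
      (2 * k + lam + 1) * (2 * k + lam + 2) * poissonCoef lam k := by
  unfold poissonCoef
  have h2 := (Real.Gamma_pos_of_pos (s := k + lam + 1 / 2) (by positivity)).ne'
  have e1 : Real.Gamma (2 * ((k + 1 : ℕ) : ℝ) + lam + 1) =
      (2 * k + lam + 2) * ((2 * k + lam + 1) * Real.Gamma (2 * k + lam + 1)) := by
    rw [← Real.Gamma_add_one (s := 2 * k + lam + 1) (by positivity),
      show (2 * (k : ℝ) + lam + 2) = 2 * k + lam + 1 + 1 by ring,
      ← Real.Gamma_add_one (by positivity)]
    congr 1; push_cast; ring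
  have e2 : Real.Gamma (((k + 1 : ℕ) : ℝ) + lam + 1 / 2) =
      (k + lam + 1 / 2) * Real.Gamma (k + lam + 1 / 2) := by
    rw [← Real.Gamma_add_one (by positivity)]
    congr 1; push_cast; ring
  have h3 : (k + lam + 1 / 2 : ℝ) ≠ 0 := by positivity
  have h4 : (Nat.factorial k : ℝ) ≠ 0 := by positivity
  rw [e1, e2, Nat.factorial_succ]
  push_cast
  field_simp

lemma ratioFour_poissonCoef {lam : ℝ} (hlam : 0 < lam) : RatioFour (poissonCoef lam) := by
  refine ⟨poissonCoef_pos hlam, ?_⟩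
  have hz (a : ℝ) : Tendsto (fun k : ℕ => a / ((k : ℝ) + 1)) atTop (nhds 0) := by
    simpa [div_eq_mul_inv] using
      (tendsto_one_div_add_atTop_nhds_zero_nat (𝕜 := ℝ)).const_mul a
  have h : Tendsto (fun k : ℕ => (2 + (lam - 1) / ((k : ℝ) + 1)) * (2 + lam / ((k : ℝ) + 1)) /
      (1 + (lam - 1 / 2) / ((k : ℝ) + 1))) atTop (nhds ((2 + 0) * (2 + 0) / (1 + 0))) :=
    ((tendsto_const_nhds.add (hz _)).mul (tendsto_const_nhds.add (hz _))).div
      (tendsto_const_nhds.add (hz _)) (by norm_num)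
  norm_num at h
  refine h.congr fun k => ?_
  have h0 := (poissonCoef_pos hlam k).ne'
  have h1 : (k + lam + 1 / 2 : ℝ) ≠ 0 := by positivity
  have h2 : ((k : ℝ) + 1) ≠ 0 := by positivity
  have h3 : (1 + (lam - 1 / 2) / ((k : ℝ) + 1)) = (k + lam + 1 / 2) / (k + 1) := by
    field_simp; ring
  have h4 := poissonCoef_succ hlam k
  rw [h3, eq_div_iff h0, div_mul_eq_mul_div, div_eq_iff (div_ne_zero h1 h2)]
  rw [mul_div_assoc', eq_div_iff h2]
  field_simp at h4 ⊢
  linear_combination -h4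

/-- The hypergeometric equation satisfied by the power series of the Bessel–Poisson kernel. -/
lemma powerSum_poissonCoef_ode {lam : ℝ} (hlam : 0 < lam) {w : ℝ} (hw : |w| < 1 / 4) :
    w * (1 - 4 * w) * powerSum (derivCoef (derivCoef (poissonCoef lam))) w +
      (lam + 1 / 2 - (4 * lam + 10) * w) * powerSum (derivCoef (poissonCoef lam)) w -
      (lam + 1) * (lam + 2) * powerSum (poissonCoef lam) w = 0 := by
  have hc := ratioFour_poissonCoef hlam
  set c := poissonCoef lam with hcdef
  have s0 := (hc.summable hw).hasSum
  have s1 := (hc.derivCoef.summable hw).hasSum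
  have s2 := (hc.derivCoef.derivCoef.summable hw).hasSum
  have t1 : HasSum (fun k : ℕ => (k : ℝ) * c k * w ^ k) (w * powerSum (derivCoef c) w) := by
    rw [← hasSum_nat_add_iff' 1]
    simpa [derivCoef, pow_succ, mul_comm, mul_left_comm, mul_assoc, powerSum]
      using s1.mul_left w
  have t2 : HasSum (fun k : ℕ => (k : ℝ) * (k + 1) * c (k + 1) * w ^ k)
      (w * powerSum (derivCoef (derivCoef c)) w) := by
    rw [← hasSum_nat_add_iff' 1]
    simp only [Finset.range_one, Finset.sum_singleton, Nat.cast_zero, zero_mul, sub_zero]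
    convert! s2.mul_left w using 1
    funext k
    simp only [derivCoef]
    push_cast
    ring
  have t3 : HasSum (fun k : ℕ => (k : ℝ) * (k - 1) * c k * w ^ k)
      (w ^ 2 * powerSum (derivCoef (derivCoef c)) w) := by
    rw [← hasSum_nat_add_iff' 2]
    simp only [Finset.sum_range_succ, Finset.range_zero, Finset.sum_empty, Nat.cast_zero,
      Nat.cast_one, zero_mul, sub_self, mul_zero, add_zero, sub_zero]
    convert! s2.mul_left (w ^ 2) using 1
    funext k
    simp only [derivCoef]
    push_cast
    ring
  have key := ((t2.add (s1.mul_left (lam + 1 / 2))).sub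
    ((t3.mul_left 4).add ((t1.mul_left (4 * lam + 10)).add (s0.mul_left ((lam + 1) * (lam + 2))))))
  have hz := key.unique (by
    convert! (hasSum_zero : HasSum (fun _ : ℕ => (0 : ℝ)) 0) using 1
    funext k
    have := poissonCoef_succ hlam k
    rw [← hcdef] at this
    simp only [derivCoef]
    linear_combination w ^ k * this)
  simp only [powerSum] at hz ⊢
  linear_combination hz

section ParametricIntegral

variable {E F Y : Type} [NormedAddCommGroup E] [NormedAddCommGroup F] [MeasurableSpace Y]
  {μ : Measure Y} {g : Y → ℝ} {a : Y → ℝ} {O : Set E} {K : Set ℝ} {U : Set (E × ℝ)}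

lemma aestronglyMeasurable_param (hK : IsCompact K) (hU : O ×ˢ K ⊆ U)
    {R : E × ℝ → F} (hR : ContinuousOn R U) (ha : Measurable a) (haK : ∀ y, a y ∈ K)
    {p : E} (hp : p ∈ O) : AEStronglyMeasurable (fun y => R (p, a y)) μ := by
  have h1 : ContinuousOn (fun k => R (p, k)) K :=
    hR.comp (by fun_prop) fun k hk => hU ⟨hp, hk⟩
  have h2 : (μ.map a).restrict K = μ.map a :=
    Measure.restrict_eq_self_of_ae_mem
      ((ae_map_iff ha.aemeasurable hK.measurableSet).2 (Eventually.of_forall haK))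
  have h3 : AEStronglyMeasurable (fun k => R (p, k)) (μ.map a) := by
    rw [← h2]; exact h1.aestronglyMeasurable hK.measurableSet
  exact h3.comp_measurable ha

variable [ProperSpace E]

lemma exists_nhds_bound_of_continuousOn (hO : IsOpen O) (hK : IsCompact K) (hU : O ×ˢ K ⊆ U)
    {R : E × ℝ → F} (hR : ContinuousOn R U) {p : E} (hp : p ∈ O) :
    ∃ s ∈ nhds p, s ⊆ O ∧ ∃ C, ∀ q ∈ s, ∀ k ∈ K, ‖R (q, k)‖ ≤ C := by
  obtain ⟨ε, hε, hs⟩ := Metric.nhds_basis_closedBall.mem_iff.1 (hO.mem_nhds hp)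
  obtain ⟨C, hC⟩ := ((isCompact_closedBall p ε).prod hK).exists_bound_of_continuousOn
    (hR.mono ((prod_mono hs subset_rfl).trans hU))
  exact ⟨_, Metric.closedBall_mem_nhds p hε, hs, C, fun q hq k hk => hC (q, k) ⟨hq, hk⟩⟩

variable [NormedSpace ℝ F]

lemma integrable_param (hO : IsOpen O) (hK : IsCompact K) (hU : O ×ˢ K ⊆ U)
    {R : E × ℝ → F} (hR : ContinuousOn R U) (ha : Measurable a) (haK : ∀ y, a y ∈ K)
    (hg : Integrable g μ) {p : E} (hp : p ∈ O) : Integrable (fun y => g y • R (p, a y)) μ := by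
  obtain ⟨s, hs, -, C, hC⟩ := exists_nhds_bound_of_continuousOn hO hK hU hR hp
  exact hg.smul_bdd C (aestronglyMeasurable_param hK hU hR ha haK hp)
    (Eventually.of_forall fun y => hC p (mem_of_mem_nhds hs) _ (haK y))

lemma continuousOn_integral_param (hO : IsOpen O) (hK : IsCompact K)
    (hU : O ×ˢ K ⊆ U) {R : E × ℝ → F} (hR : ContinuousOn R U) (ha : Measurable a)
    (haK : ∀ y, a y ∈ K) (hg : Integrable g μ) :
    ContinuousOn (fun p => ∫ y, g y • R (p, a y) ∂μ) O := by
  intro p hp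
  obtain ⟨s, hs, hsO, C, hC⟩ := exists_nhds_bound_of_continuousOn hO hK hU hR hp
  refine ContinuousAt.continuousWithinAt
    (continuousAt_of_dominated (bound := fun y => ‖g y‖ * C) ?_ ?_ (hg.norm.mul_const C) ?_)
  · filter_upwards [hO.mem_nhds hp] with q hq
    exact (integrable_param hO hK hU hR ha haK hg hq).aestronglyMeasurable
  · filter_upwards [hs] with q hq
    refine Eventually.of_forall fun y => ?_
    rw [norm_smul]
    exact mul_le_mul_of_nonneg_left (hC q hq _ (haK y)) (norm_nonneg _)
  · refine Eventually.of_forall fun y => ?_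
    have h1 : ContinuousOn (fun q => R (q, a y)) O :=
      hR.comp (by fun_prop) fun q hq => hU ⟨hq, haK y⟩
    exact (h1.continuousAt (hO.mem_nhds hp)).const_smul _

variable [NormedSpace ℝ E]

lemma hasFDerivAt_integral_param (hO : IsOpen O) (hK : IsCompact K)
    (hUo : IsOpen U) (hU : O ×ˢ K ⊆ U) {R : E × ℝ → F} (hR : ContDiffOn ℝ 1 R U)
    (ha : Measurable a) (haK : ∀ y, a y ∈ K) (hg : Integrable g μ) {p : E} (hp : p ∈ O) :
    HasFDerivAt (fun p => ∫ y, g y • R (p, a y) ∂μ)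
      (∫ y, g y • (fderiv ℝ R (p, a y)).comp (ContinuousLinearMap.inl ℝ E ℝ) ∂μ) p := by
  have hR' : ContinuousOn (fun z => (fderiv ℝ R z).comp (ContinuousLinearMap.inl ℝ E ℝ)) U :=
    (hR.continuousOn_fderiv_of_isOpen hUo le_rfl).clm_comp continuousOn_const
  obtain ⟨s, hs, hsO, C, hC⟩ := exists_nhds_bound_of_continuousOn hO hK hU hR' hp
  refine hasFDerivAt_integral_of_dominated_of_fderiv_le (bound := fun y => ‖g y‖ * C)
    (F' := fun p y => g y • (fderiv ℝ R (p, a y)).comp (ContinuousLinearMap.inl ℝ E ℝ)) hs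
    ?_ (integrable_param hO hK hU hR.continuousOn ha haK hg hp)
    (integrable_param hO hK hU hR' ha haK hg hp).aestronglyMeasurable ?_
    (hg.norm.mul_const C) ?_
  · filter_upwards [hO.mem_nhds hp] with q hq
    exact (integrable_param hO hK hU hR.continuousOn ha haK hg hq).aestronglyMeasurable
  · refine Eventually.of_forall fun y q hq => ?_
    rw [norm_smul]
    exact mul_le_mul_of_nonneg_left (hC q hq _ (haK y)) (norm_nonneg _)
  · refine Eventually.of_forall fun y q hq => ?_
    have h1 : HasFDerivAt R (fderiv ℝ R (q, a y)) (q, a y) :=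
      ((hR.differentiableOn one_ne_zero).differentiableAt
        (hUo.mem_nhds (hU ⟨hsO hq, haK y⟩))).hasFDerivAt
    exact (h1.comp q (hasFDerivAt_prodMk_left q (a y))).const_smul _

end ParametricIntegral

/-- An integral of a `C^n` family over a compact set of auxiliary parameters is `C^n`. -/
lemma contDiffOn_integral_param {E Y : Type} [NormedAddCommGroup E] [NormedSpace ℝ E]
    [ProperSpace E] [MeasurableSpace Y] {μ : Measure Y} {g : Y → ℝ} {a : Y → ℝ} {O : Set E}
    {K : Set ℝ} {U : Set (E × ℝ)} (hO : IsOpen O) (hK : IsCompact K)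
    (hUo : IsOpen U) (hU : O ×ˢ K ⊆ U) (ha : Measurable a) (haK : ∀ y, a y ∈ K)
    (hg : Integrable g μ) (n : ℕ) {F : Type} [NormedAddCommGroup F] [NormedSpace ℝ F]
    {R : E × ℝ → F} (hR : ContDiffOn ℝ n R U) :
    ContDiffOn ℝ n (fun p => ∫ y, g y • R (p, a y) ∂μ) O := by
  induction n generalizing F with
  | zero =>
    exact contDiffOn_zero.2 (continuousOn_integral_param hO hK hU hR.continuousOn ha haK hg)
  | succ n ih =>
    have hR1 : ContDiffOn ℝ 1 R U := hR.of_le (by exact_mod_cast Nat.le_add_left 1 n)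
    rw [Nat.cast_add, Nat.cast_one, contDiffOn_succ_iff_fderiv_of_isOpen hO]
    refine ⟨fun p hp => (hasFDerivAt_integral_param hO hK hUo hU hR1 ha haK hg
      hp).differentiableAt.differentiableWithinAt, by simp, ?_⟩
    have hR' : ContDiffOn ℝ n
        (fun z => (fderiv ℝ R z).comp (ContinuousLinearMap.inl ℝ E ℝ)) U :=
      (hR.fderiv_of_isOpen hUo (by exact_mod_cast le_rfl)).clm_comp contDiffOn_const
    exact (ih hR').congr fun p hp =>
      (hasFDerivAt_integral_param hO hK hUo hU hR1 ha haK hg hp).fderiv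

/-- Second derivatives pass under an integral over a compact set of auxiliary parameters. -/
lemma deriv_deriv_integral_param {Y : Type} [MeasurableSpace Y] {μ : Measure Y} {g : Y → ℝ}
    {a : Y → ℝ} {O : Set ℝ} {K : Set ℝ} {U : Set (ℝ × ℝ)} (hO : IsOpen O) (hK : IsCompact K)
    (hUo : IsOpen U) (hU : O ×ˢ K ⊆ U) (ha : Measurable a) (haK : ∀ y, a y ∈ K)
    (hg : Integrable g μ) {R : ℝ × ℝ → ℝ} (hR : ContDiffOn ℝ 2 R U) {p : ℝ} (hp : p ∈ O) :
    Integrable (fun y => g y * deriv (deriv fun q => R (q, a y)) p) μ ∧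
    deriv (deriv fun q => ∫ y, g y * R (q, a y) ∂μ) p =
      ∫ y, g y * deriv (deriv fun q => R (q, a y)) p ∂μ := by
  have step {R : ℝ × ℝ → ℝ} (hR : ContDiffOn ℝ 1 R U) {p : ℝ} (hp : p ∈ O) :
      deriv (fun q => ∫ y, g y * R (q, a y) ∂μ) p =
        ∫ y, g y * fderiv ℝ R (p, a y) (1, 0) ∂μ := by
    have h := (hasFDerivAt_integral_param hO hK hUo hU hR ha haK hg hp).hasDerivAt.deriv
    have hR' : ContinuousOn (fun z => (fderiv ℝ R z).comp (ContinuousLinearMap.inl ℝ ℝ ℝ)) U :=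
      (hR.continuousOn_fderiv_of_isOpen hUo le_rfl).clm_comp continuousOn_const
    rw [ContinuousLinearMap.integral_apply (integrable_param hO hK hU hR' ha haK hg hp)] at h
    simpa using h
  have slice {R : ℝ × ℝ → ℝ} (hR : ContDiffOn ℝ 1 R U) {p : ℝ} (hp : p ∈ O) {k : ℝ}
      (hk : k ∈ K) : deriv (fun q => R (q, k)) p = fderiv ℝ R (p, k) (1, 0) := by
    have h1 : HasFDerivAt R (fderiv ℝ R (p, k)) (p, k) :=
      ((hR.differentiableOn one_ne_zero).differentiableAt
        (hUo.mem_nhds (hU ⟨hp, hk⟩))).hasFDerivAt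
    simpa [Function.comp_def] using
      (h1.comp p (hasFDerivAt_prodMk_left p k)).hasDerivAt.deriv
  have hR1 : ContDiffOn ℝ 1 R U := hR.of_le (by norm_num)
  have hR' : ContDiffOn ℝ 1 (fun z => fderiv ℝ R z (1, 0)) U :=
    (hR.fderiv_of_isOpen hUo (by norm_num)).clm_apply contDiffOn_const
  have hR'' : ContinuousOn (fun z => fderiv ℝ (fun z => fderiv ℝ R z (1, 0)) z (1, 0)) U :=
    (hR'.continuousOn_fderiv_of_isOpen hUo le_rfl).clm_apply continuousOn_const
  have hd (k : ℝ) (hk : k ∈ K) : deriv (deriv fun q => R (q, k)) p =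
      fderiv ℝ (fun z => fderiv ℝ R z (1, 0)) (p, k) (1, 0) := by
    rw [← slice hR' hp hk]
    refine EventuallyEq.deriv_eq ?_
    filter_upwards [hO.mem_nhds hp] with q hq
    exact slice hR1 hq hk
  simp only [hd _ (haK _)]
  refine ⟨integrable_param hO hK hU hR'' ha haK hg hp, ?_⟩
  rw [← step hR' hp]
  refine EventuallyEq.deriv_eq ?_
  filter_upwards [hO.mem_nhds hp] with q hq
  exact step hR1 hq

/-- The affine interpolation `a (x² + t²) + (1 - a)`. -/
def interpDenom (x t a : ℝ) : ℝ := a * (x ^ 2 + t ^ 2) + (1 - a)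

/-- The Bessel–Poisson kernel in the variable `a = (1 + y²)⁻¹`, up to a factor depending only on
`y`. -/
def poissonProfile (lam x t a : ℝ) : ℝ :=
  2 / √π * (t * x ^ lam * interpDenom x t a ^ (-(lam + 1))) *
    powerSum (poissonCoef lam) (a * (1 - a) * x ^ 2 / interpDenom x t a ^ 2)

/-- The open set on which `poissonProfile` is smooth. -/
def profileDomain : Set ((ℝ × ℝ) × ℝ) :=
  {z | 0 < z.1.1 ∧ 0 < z.1.2 ∧ 0 < interpDenom z.1.1 z.1.2 z.2 ∧
    4 * |z.2 * (1 - z.2) * z.1.1 ^ 2| < interpDenom z.1.1 z.1.2 z.2 ^ 2}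

lemma isOpen_profileDomain : IsOpen profileDomain := by
  have h : Continuous fun z : (ℝ × ℝ) × ℝ => interpDenom z.1.1 z.1.2 z.2 := by
    unfold interpDenom; fun_prop
  have h1 : Continuous fun z : (ℝ × ℝ) × ℝ => z.1.1 := by fun_prop
  have h2 : Continuous fun z : (ℝ × ℝ) × ℝ => z.1.2 := by fun_prop
  have h3 : Continuous fun z : (ℝ × ℝ) × ℝ => 4 * |z.2 * (1 - z.2) * z.1.1 ^ 2| := by fun_prop
  exact (isOpen_lt continuous_const h1).inter ((isOpen_lt continuous_const h2).inter
    ((isOpen_lt continuous_const h).inter (isOpen_lt h3 (h.pow 2))))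

lemma mem_profileDomain {x t a : ℝ} (hx : 0 < x) (ht : 0 < t) (ha : a ∈ Icc (0 : ℝ) 1) :
    ((x, t), a) ∈ profileDomain := by
  obtain ⟨h0, h1⟩ := ha
  have h1' : 0 ≤ 1 - a := by linarith
  have hk : 0 ≤ a * (1 - a) * x ^ 2 := by positivity
  refine ⟨hx, ht, ?_, ?_⟩ <;> simp only [interpDenom]
  · rcases h0.eq_or_lt with rfl | h0
    · simp
    · positivity
  · rw [abs_of_nonneg hk]
    rcases h0.eq_or_lt with rfl | h0
    · simp
    · have e : 0 ≤ a * x ^ 2 + (1 - a) := by positivity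
      have e2 : 0 < a * t ^ 2 := by positivity
      nlinarith [sq_nonneg (a * x ^ 2 - (1 - a)), mul_nonneg e e2.le]

lemma abs_arg_lt {x t a : ℝ} (hT : 0 < interpDenom x t a)
    (h : 4 * |a * (1 - a) * x ^ 2| < interpDenom x t a ^ 2) :
    |a * (1 - a) * x ^ 2 / interpDenom x t a ^ 2| < 1 / 4 := by
  rw [abs_div, abs_of_pos (pow_pos hT 2), div_lt_iff₀ (pow_pos hT 2)]
  linarith

lemma contDiffOn_poissonProfile {lam : ℝ} (hlam : 0 < lam) (n : ℕ) :
    ContDiffOn ℝ n (fun z : (ℝ × ℝ) × ℝ => poissonProfile lam z.1.1 z.1.2 z.2)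
      profileDomain := by
  have hT : ContDiffOn ℝ n (fun z : (ℝ × ℝ) × ℝ => interpDenom z.1.1 z.1.2 z.2)
      profileDomain := by
    unfold interpDenom; fun_prop
  have hx : ContDiffOn ℝ n (fun z : (ℝ × ℝ) × ℝ => z.1.1) profileDomain := by fun_prop
  have ht : ContDiffOn ℝ n (fun z : (ℝ × ℝ) × ℝ => z.1.2) profileDomain := by fun_prop
  have ha : ContDiffOn ℝ n (fun z : (ℝ × ℝ) × ℝ => z.2 * (1 - z.2) * z.1.1 ^ 2)
      profileDomain := by fun_prop
  have hW := ha.div (hT.pow 2) fun z hz => (pow_pos hz.2.2.1 2).ne'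
  have hF := ((ratioFour_poissonCoef hlam).contDiffOn n).comp hW fun z hz => by
    rw [mem_ball_zero_iff, Real.norm_eq_abs]
    exact abs_arg_lt hz.2.2.1 hz.2.2.2
  exact (contDiffOn_const.mul ((ht.mul (hx.rpow_const_of_ne fun z hz => hz.1.ne')).mul
    (hT.rpow_const_of_ne fun z hz => hz.2.2.1.ne'))).mul hF

/-- Second derivative of `M · (powerSum c ∘ W)`. -/
lemma RatioFour.deriv_deriv_mul_comp {c : ℕ → ℝ} (hc : RatioFour c) {O : Set ℝ} (hO : IsOpen O)
    {M M₁ W W₁ : ℝ → ℝ} {M₂ W₂ s : ℝ} (hs : s ∈ O) (hM : ∀ r ∈ O, HasDerivAt M (M₁ r) r)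
    (hM₁ : HasDerivAt M₁ M₂ s) (hW : ∀ r ∈ O, HasDerivAt W (W₁ r) r)
    (hW₁ : HasDerivAt W₁ W₂ s) (hlt : ∀ r ∈ O, |W r| < 1 / 4) :
    deriv (deriv fun r => M r * powerSum c (W r)) s =
      M₂ * powerSum c (W s) + 2 * M₁ s * W₁ s * powerSum (_root_.derivCoef c) (W s) +
      M s * (W₂ * powerSum (_root_.derivCoef c) (W s) +
        W₁ s ^ 2 * powerSum (_root_.derivCoef (_root_.derivCoef c)) (W s)) := by
  have h1 : ∀ r ∈ O, HasDerivAt (fun r => M r * powerSum c (W r))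
      (M₁ r * powerSum c (W r) + M r * (powerSum (_root_.derivCoef c) (W r) * W₁ r)) r :=
    fun r hr => (hM r hr).mul ((hc.hasDerivAt (hlt r hr)).comp r (hW r hr))
  have h2 : deriv (fun r => M r * powerSum c (W r)) =ᶠ[nhds s] fun r =>
      M₁ r * powerSum c (W r) + M r * (powerSum (_root_.derivCoef c) (W r) * W₁ r) := by
    filter_upwards [hO.mem_nhds hs] with r hr using (h1 r hr).deriv
  rw [h2.deriv_eq]
  have hF := (hc.hasDerivAt (hlt s hs)).comp s (hW s hs)
  have hF1 := (hc.derivCoef.hasDerivAt (hlt s hs)).comp s (hW s hs)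
  refine ((hM₁.mul hF).add ((hM s hs).mul (hF1.mul hW₁))).deriv.trans ?_
  simp only [Function.comp_apply, Pi.mul_apply]
  ring

lemma hasDerivAt_rpow_of_pos {T : ℝ → ℝ} {T' q s : ℝ} (hT : HasDerivAt T T' s) (h : 0 < T s) :
    HasDerivAt (fun r => T r ^ q) (q * (T s ^ q) / T s * T') s := by
  convert hT.rpow_const (p := q) (Or.inl h.ne') using 1
  rw [Real.rpow_sub_one h.ne']
  ring

lemma poissonProfile_pde {lam x t a : ℝ} (hlam : 0 < lam) (hx : 0 < x) (ht : 0 < t)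
    (ha : a ∈ Icc (0 : ℝ) 1) :
    deriv (deriv fun s => poissonProfile lam x s a) t +
      deriv (deriv fun z => poissonProfile lam z t a) x -
      lam * (lam - 1) / x ^ 2 * poissonProfile lam x t a = 0 := by
  have hc := ratioFour_poissonCoef hlam
  have hdom {x t : ℝ} (hx : 0 < x) (ht : 0 < t) := mem_profileDomain hx ht ha
  have hTt (s : ℝ) : HasDerivAt (fun s => interpDenom x s a) (2 * a * s) s := by
    unfold interpDenom
    have := ((((hasDerivAt_pow 2 s).const_add (x ^ 2)).const_mul a).add_const (1 - a))
    convert! this using 1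
    simp; ring
  have hTx (s : ℝ) : HasDerivAt (fun s => interpDenom s t a) (2 * a * s) s := by
    unfold interpDenom
    have := ((((hasDerivAt_pow 2 s).add_const (t ^ 2)).const_mul a).add_const (1 - a))
    convert! this using 1
    simp; ring
  have hκ : a * (1 - a) = a * (interpDenom x t a - a * (x ^ 2 + t ^ 2)) := by
    unfold interpDenom; ring
  have hT0 : 0 < interpDenom x t a := (hdom hx ht).2.2.1
  have ode := powerSum_poissonCoef_ode hlam
    (abs_arg_lt (x := x) (t := t) (a := a) hT0 (hdom hx ht).2.2.2)
  have Et := hc.deriv_deriv_mul_comp isOpen_Ioi (mem_Ioi.2 ht)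
    (M := fun s => 2 / √π * (s * x ^ lam * interpDenom x s a ^ (-(lam + 1))))
    (M₁ := fun s => 2 / √π * x ^ lam * (interpDenom x s a ^ (-(lam + 1)) *
      (1 - (lam + 1) * (2 * a * s ^ 2) / interpDenom x s a)))
    (M₂ := 2 / √π * x ^ lam * interpDenom x t a ^ (-(lam + 1)) *
      (-(lam + 1) * (2 * a * t) / interpDenom x t a *
        (1 - (lam + 1) * (2 * a * t ^ 2) / interpDenom x t a) -
        (lam + 1) * (4 * a * t / interpDenom x t a - 4 * a ^ 2 * t ^ 3 / interpDenom x t a ^ 2)))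
    (W := fun s => a * (1 - a) * x ^ 2 / interpDenom x s a ^ 2)
    (W₁ := fun s => - (a * (1 - a)) * x ^ 2 * 4 * a * s / interpDenom x s a ^ 3)
    (W₂ := -(a * (1 - a)) * x ^ 2 * 4 * a *
      (1 / interpDenom x t a ^ 3 - 6 * a * t ^ 2 / interpDenom x t a ^ 4))
    (fun r hr => by
      have h := (hdom hx hr).2.2.1
      convert! (((hasDerivAt_id r).mul_const (x ^ lam)).mul
        (hasDerivAt_rpow_of_pos (q := -(lam + 1)) (hTt r) h)).const_mul (2 / √π) using 1
      simp only [id]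
      field_simp
      ring)
    (by
      convert! ((hasDerivAt_rpow_of_pos (q := -(lam + 1)) (hTt t) hT0).mul
        (((((hasDerivAt_pow 2 t).const_mul (2 * a)).const_mul (lam + 1)).div (hTt t)
          hT0.ne').const_sub 1)).const_mul (2 / √π * x ^ lam) using 1
      simp only [Pi.div_apply, Nat.cast_ofNat, Nat.add_one_sub_one, pow_one]
      field_simp
      ring)
    (fun r hr => by
      have h := (hdom hx hr).2.2.1
      convert! (hasDerivAt_const r (a * (1 - a) * x ^ 2)).div ((hTt r).pow 2)
        (pow_pos h 2).ne' using 1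
      simp only [Pi.pow_apply, Nat.cast_ofNat, Nat.add_one_sub_one, pow_one]
      field_simp
      ring)
    (by
      convert! ((hasDerivAt_id t).const_mul (-(a * (1 - a)) * x ^ 2 * 4 * a)).div ((hTt t).pow 3)
        (pow_pos hT0 3).ne' using 1
      simp only [Pi.pow_apply, id, Nat.cast_ofNat, Nat.add_one_sub_one]
      field_simp
      ring)
    (fun r hr => abs_arg_lt (hdom hx hr).2.2.1 (hdom hx hr).2.2.2)
  have Ex := hc.deriv_deriv_mul_comp isOpen_Ioi (mem_Ioi.2 hx)
    (M := fun z => 2 / √π * (t * z ^ lam * interpDenom z t a ^ (-(lam + 1))))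
    (M₁ := fun z => 2 / √π * t * (z ^ lam * interpDenom z t a ^ (-(lam + 1)) *
      (lam / z - (lam + 1) * (2 * a * z) / interpDenom z t a)))
    (M₂ := 2 / √π * t * (x ^ lam * interpDenom x t a ^ (-(lam + 1)) *
      ((lam / x - (lam + 1) * (2 * a * x) / interpDenom x t a) ^ 2 - lam / x ^ 2 -
        (lam + 1) * (2 * a / interpDenom x t a - 4 * a ^ 2 * x ^ 2 / interpDenom x t a ^ 2))))
    (W := fun z => a * (1 - a) * z ^ 2 / interpDenom z t a ^ 2)
    (W₁ := fun z => a * (1 - a) *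
      (2 * z / interpDenom z t a ^ 2 - 4 * a * z ^ 3 / interpDenom z t a ^ 3))
    (W₂ := a * (1 - a) * (2 / interpDenom x t a ^ 2 - 20 * a * x ^ 2 / interpDenom x t a ^ 3 +
      24 * a ^ 2 * x ^ 4 / interpDenom x t a ^ 4))
    (fun r hr => by
      have hr : 0 < r := hr
      have h := (hdom hr ht).2.2.1
      convert! (((hasDerivAt_rpow_of_pos (q := lam) (hasDerivAt_id r) hr).const_mul t).mul
        (hasDerivAt_rpow_of_pos (q := -(lam + 1)) (hTx r) h)).const_mul (2 / √π) using 1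
      simp only [id]
      field_simp
      ring)
    (by
      convert! (((hasDerivAt_rpow_of_pos (q := lam) (hasDerivAt_id x) hx).mul
        (hasDerivAt_rpow_of_pos (q := -(lam + 1)) (hTx x) hT0)).mul
        (((hasDerivAt_const x lam).div (hasDerivAt_id x) hx.ne').sub
          ((((hasDerivAt_id x).const_mul (2 * a)).const_mul (lam + 1)).div (hTx x)
          hT0.ne'))).const_mul (2 / √π * t) using 1
      simp only [Pi.div_apply, Pi.mul_apply, Pi.sub_apply, id]
      field_simp
      ring)
    (fun r hr => by
      have h := (hdom hr ht).2.2.1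
      convert! ((hasDerivAt_pow 2 r).const_mul (a * (1 - a))).div ((hTx r).pow 2)
        (pow_pos h 2).ne' using 1
      simp only [Pi.pow_apply, Nat.cast_ofNat, Nat.add_one_sub_one, pow_one]
      field_simp
      ring)
    (by
      convert! ((((hasDerivAt_id x).const_mul 2).div ((hTx x).pow 2) (pow_pos hT0 2).ne').sub
        (((hasDerivAt_pow 3 x).const_mul (4 * a)).div ((hTx x).pow 3)
        (pow_pos hT0 3).ne')).const_mul (a * (1 - a)) using 1
      simp only [Pi.pow_apply, id, Nat.cast_ofNat, Nat.add_one_sub_one, pow_one]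
      field_simp
      ring)
    (fun r hr => abs_arg_lt (hdom hr ht).2.2.1 (hdom hr ht).2.2.2)
  unfold poissonProfile
  rw [Et, Ex]
  generalize powerSum (derivCoef (derivCoef (poissonCoef lam))) _ = F₂ at ode ⊢
  generalize powerSum (derivCoef (poissonCoef lam)) _ = F₁ at ode ⊢
  generalize powerSum (poissonCoef lam) _ = F₀ at ode ⊢
  generalize interpDenom x t a ^ (-(lam + 1)) = Z
  generalize x ^ lam = X
  rw [hκ] at ode ⊢
  clear Et Ex hTt hTx hdom hκ
  generalize interpDenom x t a = T at hT0 ode ⊢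
  generalize 2 / √π = C
  have hT' := hT0.ne'
  have hx' := hx.ne'
  have key := congrArg (fun r => 4 * a * (T - a * (x ^ 2 + t ^ 2)) / T ^ 2 * C * t * X * Z * r) ode
  simp only [mul_zero] at key
  rw [← key]
  field_simp
  ring

lemma rpow_neg_one_comp {m A s : ℝ} (hs : 0 < s) :
    (|(-1 : ℝ)| * s ^ ((-1 : ℝ) - 1)) • ((s ^ (-1 : ℝ)) ^ (m - 1) * rexp (-(A * s ^ (-1 : ℝ)))) =
      s ^ (-(m + 1)) * rexp (-(A / s)) := by
  rw [← Real.rpow_mul hs.le, abs_neg, abs_one, one_mul, smul_eq_mul, ← mul_assoc,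
    ← Real.rpow_add hs, Real.rpow_neg_one, ← div_eq_mul_inv]
  ring_nf

lemma integrableOn_rpow_mul_exp_neg_div {m A : ℝ} (hm : 0 < m) (hA : 0 < A) :
    IntegrableOn (fun s => s ^ (-(m + 1)) * rexp (-(A / s))) (Ioi 0) := by
  have h := integrableOn_rpow_mul_exp_neg_mul_rpow (p := 1) (s := m - 1) (b := A) (by linarith)
    one_pos hA
  have h' : IntegrableOn (fun u : ℝ => u ^ (m - 1) * rexp (-(A * u))) (Ioi 0) := by
    simpa [neg_mul] using h
  rw [← integrableOn_Ioi_comp_rpow_iff _ (p := -1) (by norm_num)] at h'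
  exact h'.congr_fun (fun s hs => rpow_neg_one_comp hs) measurableSet_Ioi

lemma integral_rpow_mul_exp_neg_div {m A : ℝ} (hm : 0 < m) (hA : 0 < A) :
    ∫ s in Ioi (0 : ℝ), s ^ (-(m + 1)) * rexp (-(A / s)) = A ^ (-m) * Real.Gamma m := by
  have h := integral_comp_rpow_Ioi (fun u : ℝ => u ^ (m - 1) * rexp (-(A * u))) (p := -1)
    (by norm_num)
  rw [Real.integral_rpow_mul_exp_neg_mul_Ioi hm hA, one_div, Real.inv_rpow hA.le,
    ← Real.rpow_neg hA.le] at h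
  rw [← h]
  exact setIntegral_congr_fun measurableSet_Ioi fun s hs => (rpow_neg_one_comp hs).symm

/-- The terms of the power series expansion of the Bessel heat kernel. -/
def heatTerm (lam s x y : ℝ) (k : ℕ) : ℝ :=
  √(x * y) / (2 * s) * ((x * y / (2 * s) / 2) ^ (2 * (k : ℝ) + (lam - 1 / 2)) /
    ((Nat.factorial k : ℝ) * Real.Gamma ((k : ℝ) + (lam - 1 / 2) + 1))) *
    rexp (-(x ^ 2 + y ^ 2) / (4 * s))

lemma besselHeatKernel_eq_tsum (lam s x y : ℝ) :
    besselHeatKernel lam s x y = ∑' k, heatTerm lam s x y k := by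
  unfold heatTerm
  rw [tsum_mul_right, tsum_mul_left]
  rfl

lemma exists_exp_eq {s : ℝ} (hs : 0 < s) : ∃ σ, s = rexp σ := ⟨Real.log s, (Real.exp_log hs).symm⟩

/-- The terms of the Bessel–Poisson kernel are inverse Gamma densities in the time variable. -/
lemma subordinated_heatTerm {lam s t x y : ℝ} (hs : 0 < s) (hx : 0 < x) (hy : 0 < y) (k : ℕ) :
    s ^ (-(3 : ℝ) / 2) * rexp (-t ^ 2 / (4 * s)) * heatTerm lam s x y k =
      (x * y) ^ (2 * k + lam) * 4 ^ (-(2 * k + lam)) /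
        ((Nat.factorial k : ℝ) * Real.Gamma (k + lam + 1 / 2)) *
      (s ^ (-(2 * k + lam + 1 + 1)) * rexp (-((x ^ 2 + y ^ 2 + t ^ 2) / 4 / s))) := by
  have hG : (k : ℝ) + (lam - 1 / 2) + 1 = k + lam + 1 / 2 := by ring
  have hxy : 0 < x * y := mul_pos hx hy
  have e : rexp (-((x ^ 2 + y ^ 2 + t ^ 2) / 4 / s)) =
      rexp (-t ^ 2 / (4 * s)) * rexp (-(x ^ 2 + y ^ 2) / (4 * s)) := by
    rw [← Real.exp_add]; congr 1; field_simp; ring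
  have key : s ^ (-(3 : ℝ) / 2) * (√(x * y) / (2 * s)) *
      (x * y / (2 * s) / 2) ^ (2 * (k : ℝ) + (lam - 1 / 2)) =
      (x * y) ^ (2 * k + lam) * 4 ^ (-(2 * k + lam)) * s ^ (-(2 * k + lam + 1 + 1)) := by
    have h4 : x * y / (2 * s) / 2 = x * y / (4 * s) := by field_simp; norm_num
    have h2 : (2 : ℝ) * s = 4 ^ (1 / 2 : ℝ) * s := by
      rw [← Real.sqrt_eq_rpow, show (4 : ℝ) = 2 ^ 2 by norm_num, Real.sqrt_sq (by norm_num)]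
    rw [h4, h2, Real.sqrt_eq_rpow]
    obtain ⟨σ, rfl⟩ := exists_exp_eq hs
    obtain ⟨ζ, hζ⟩ := exists_exp_eq hxy
    obtain ⟨τ, hτ⟩ := exists_exp_eq (show (0 : ℝ) < 4 by norm_num)
    rw [hζ, hτ]
    simp only [← Real.exp_mul, ← Real.exp_add, ← Real.exp_sub]
    congr 1
    ring
  unfold heatTerm
  rw [hG, e]
  calc _ = s ^ (-(3 : ℝ) / 2) * (√(x * y) / (2 * s)) *
      (x * y / (2 * s) / 2) ^ (2 * (k : ℝ) + (lam - 1 / 2)) *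
      (rexp (-t ^ 2 / (4 * s)) * rexp (-(x ^ 2 + y ^ 2) / (4 * s)) /
        ((Nat.factorial k : ℝ) * Real.Gamma (k + lam + 1 / 2))) := by ring
    _ = _ := by rw [key]; ring

section Kernel

variable {lam t x y : ℝ}

lemma integrableOn_subordinated_heatTerm (hlam : 0 < lam) (hx : 0 < x) (hy : 0 < y) (k : ℕ) :
    IntegrableOn (fun s => s ^ (-(3 : ℝ) / 2) * rexp (-t ^ 2 / (4 * s)) * heatTerm lam s x y k)
      (Ioi 0) := by
  refine IntegrableOn.congr_fun ((integrableOn_rpow_mul_exp_neg_div (m := 2 * k + lam + 1)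
    (A := (x ^ 2 + y ^ 2 + t ^ 2) / 4) (by positivity) (by positivity)).const_mul _)
    (fun s hs => (subordinated_heatTerm hs hx hy k).symm) measurableSet_Ioi

lemma integral_subordinated_heatTerm (hlam : 0 < lam) (hx : 0 < x) (hy : 0 < y) (k : ℕ) :
    ∫ s in Ioi (0 : ℝ), s ^ (-(3 : ℝ) / 2) * rexp (-t ^ 2 / (4 * s)) * heatTerm lam s x y k =
      4 * ((x * y) ^ lam * (x ^ 2 + y ^ 2 + t ^ 2) ^ (-(lam + 1))) *
        (poissonCoef lam k * ((x * y) ^ 2 / (x ^ 2 + y ^ 2 + t ^ 2) ^ 2) ^ k) := by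
  have hS : 0 < x ^ 2 + y ^ 2 + t ^ 2 := by positivity
  have hxy : 0 < x * y := mul_pos hx hy
  rw [setIntegral_congr_fun measurableSet_Ioi fun s hs => subordinated_heatTerm hs hx hy k,
    integral_const_mul, integral_rpow_mul_exp_neg_div (by positivity) (by positivity)]
  have key : (x * y) ^ (2 * k + lam) * 4 ^ (-(2 * k + lam)) *
      ((x ^ 2 + y ^ 2 + t ^ 2) / 4) ^ (-(2 * k + lam + 1)) =
      4 * ((x * y) ^ lam * (x ^ 2 + y ^ 2 + t ^ 2) ^ (-(lam + 1))) *
        ((x * y) ^ 2 / (x ^ 2 + y ^ 2 + t ^ 2) ^ 2) ^ k := by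
    obtain ⟨σ, hσ⟩ := exists_exp_eq hS
    obtain ⟨ζ, hζ⟩ := exists_exp_eq hxy
    obtain ⟨τ, hτ⟩ := exists_exp_eq (show (0 : ℝ) < 4 by norm_num)
    rw [hσ, hζ, hτ]
    simp only [← Real.exp_mul, ← Real.exp_add, ← Real.exp_sub, ← Real.exp_nat_mul]
    congr 1
    push_cast
    ring
  unfold poissonCoef
  calc _ = (x * y) ^ (2 * k + lam) * 4 ^ (-(2 * k + lam)) *
      ((x ^ 2 + y ^ 2 + t ^ 2) / 4) ^ (-(2 * k + lam + 1)) *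
      (Real.Gamma (2 * k + lam + 1) /
        ((Nat.factorial k : ℝ) * Real.Gamma (k + lam + 1 / 2))) := by ring
    _ = _ := by rw [key]; ring

lemma heatTerm_nonneg (hlam : 0 < lam) {s : ℝ} (hs : 0 < s) (hx : 0 < x) (hy : 0 < y) (k : ℕ) :
    0 ≤ heatTerm lam s x y k := by
  have := Real.Gamma_pos_of_pos (s := (k : ℝ) + (lam - 1 / 2) + 1)
    (by have : (0 : ℝ) ≤ k := by positivity
        linarith)
  unfold heatTerm
  positivity

lemma kernel_arg_lt (hx : 0 < x) (hy : 0 < y) (ht : 0 < t) :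
    (x * y) ^ 2 / (x ^ 2 + y ^ 2 + t ^ 2) ^ 2 < 1 / 4 := by
  have hxy : 0 < x * y := mul_pos hx hy
  rw [div_lt_iff₀ (by positivity)]
  have h : 2 * (x * y) < x ^ 2 + y ^ 2 + t ^ 2 := by nlinarith [sq_nonneg (x - y)]
  nlinarith

lemma hasSum_besselPoissonKernel (hlam : 0 < lam) (hx : 0 < x) (hy : 0 < y) (ht : 0 < t) :
    HasSum (fun k => t / (2 * √π) *
      ∫ s in Ioi (0 : ℝ), s ^ (-(3 : ℝ) / 2) * rexp (-t ^ 2 / (4 * s)) * heatTerm lam s x y k)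
      (besselPoissonKernel lam t x y) := by
  have h := hasSum_integral_of_summable_integral_norm
    (fun k => integrableOn_subordinated_heatTerm (t := t) hlam hx hy k) (by
      refine Summable.congr (((ratioFour_poissonCoef hlam).summable
        (w := (x * y) ^ 2 / (x ^ 2 + y ^ 2 + t ^ 2) ^ 2) ?_).mul_left
        (4 * ((x * y) ^ lam * (x ^ 2 + y ^ 2 + t ^ 2) ^ (-(lam + 1))))) fun k => ?_
      · rw [abs_of_nonneg (by positivity)]
        exact kernel_arg_lt hx hy ht
      · rw [← integral_subordinated_heatTerm hlam hx hy k]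
        refine setIntegral_congr_fun measurableSet_Ioi fun s hs => ?_
        have hs : 0 < s := hs
        have := heatTerm_nonneg hlam hs hx hy k
        exact (Real.norm_of_nonneg (by positivity)).symm)
  have h2 := h.mul_left (t / (2 * √π))
  unfold besselPoissonKernel
  simpa only [besselHeatKernel_eq_tsum, tsum_mul_left] using h2

lemma besselPoissonKernel_eq (hlam : 0 < lam) (hx : 0 < x) (hy : 0 < y) (ht : 0 < t) :
    besselPoissonKernel lam t x y =
      y ^ lam * (1 + y ^ 2) ^ (-(lam + 1)) * poissonProfile lam x t (1 + y ^ 2)⁻¹ := by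
  have hS : 0 < x ^ 2 + y ^ 2 + t ^ 2 := by positivity
  have hρ : 0 < 1 + y ^ 2 := by positivity
  have hT : interpDenom x t (1 + y ^ 2)⁻¹ = (x ^ 2 + y ^ 2 + t ^ 2) / (1 + y ^ 2) := by
    unfold interpDenom; field_simp; ring
  have hW : (1 + y ^ 2)⁻¹ * (1 - (1 + y ^ 2)⁻¹) * x ^ 2 /
      interpDenom x t (1 + y ^ 2)⁻¹ ^ 2 = (x * y) ^ 2 / (x ^ 2 + y ^ 2 + t ^ 2) ^ 2 := by
    rw [hT]; field_simp; ring
  rw [← (hasSum_besselPoissonKernel hlam hx hy ht).tsum_eq]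
  simp only [integral_subordinated_heatTerm hlam hx hy]
  rw [tsum_mul_left, tsum_mul_left]
  unfold poissonProfile
  rw [hW, hT, Real.mul_rpow hx.le hy.le, Real.div_rpow hS.le hρ.le]
  have := (Real.rpow_pos_of_pos hρ (-(lam + 1))).ne'
  change _ * (_ * powerSum (poissonCoef lam) _) = _
  field_simp
  norm_num

end Kernel

section Mass

variable {lam t x : ℝ}

lemma measurable_heatTerm (lam x : ℝ) (k : ℕ) :
    Measurable fun p : ℝ × ℝ => heatTerm lam p.2 x p.1 k := by
  unfold heatTerm
  fun_prop

lemma heatTerm_mul_rpow {s y : ℝ} (hs : 0 < s) (hx : 0 < x) (hy : 0 < y) (k : ℕ) :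
    heatTerm lam s x y k * y ^ lam =
      x ^ lam * (x ^ 2) ^ k * 2 * (4 * s) ^ (-(2 * k + lam + 1 / 2)) /
        ((Nat.factorial k : ℝ) * Real.Gamma (k + lam + 1 / 2)) * rexp (-x ^ 2 / (4 * s)) *
      (y ^ (2 * k + 2 * lam) * rexp (-(4 * s)⁻¹ * y ^ (2 : ℝ))) := by
  have hG : (k : ℝ) + (lam - 1 / 2) + 1 = k + lam + 1 / 2 := by ring
  have e : rexp (-(x ^ 2 + y ^ 2) / (4 * s)) =
      rexp (-x ^ 2 / (4 * s)) * rexp (-(4 * s)⁻¹ * y ^ (2 : ℝ)) := by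
    rw [← Real.exp_add, Real.rpow_two]; congr 1; field_simp; ring
  have key : √(x * y) / (2 * s) * (x * y / (2 * s) / 2) ^ (2 * (k : ℝ) + (lam - 1 / 2)) *
      y ^ lam = x ^ lam * (x ^ 2) ^ k * 2 * (4 * s) ^ (-(2 * k + lam + 1 / 2)) *
        y ^ (2 * k + 2 * lam) := by
    have h4 : x * y / (2 * s) / 2 = x * y / (4 * s) := by field_simp; norm_num
    have h2 : (2 : ℝ) * s = 4 * s / 2 := by ring
    have h4s : 0 < 4 * s := by positivity
    rw [h4, h2, Real.sqrt_eq_rpow]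
    obtain ⟨σ, hσ⟩ := exists_exp_eq h4s
    obtain ⟨ξ, hξ⟩ := exists_exp_eq hx
    obtain ⟨η, hη⟩ := exists_exp_eq hy
    obtain ⟨τ, hτ⟩ := exists_exp_eq (show (0 : ℝ) < 2 by norm_num)
    have hξ2 : (x ^ 2) ^ k = rexp (2 * k * ξ) := by
      rw [hξ, ← Real.exp_nat_mul, ← Real.exp_nat_mul]; congr 1; push_cast; ring
    rw [hξ2, hσ, hξ, hη, show rexp σ / 2 = rexp σ / rexp τ by rw [← hτ],
      show rexp ξ ^ lam * rexp (2 * k * ξ) * 2 = rexp ξ ^ lam * rexp (2 * k * ξ) * rexp τ by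
        rw [← hτ]]
    simp only [← Real.exp_mul, ← Real.exp_add, ← Real.exp_sub]
    congr 1
    ring
  unfold heatTerm
  rw [hG, e]
  calc _ = √(x * y) / (2 * s) * (x * y / (2 * s) / 2) ^ (2 * (k : ℝ) + (lam - 1 / 2)) *
      y ^ lam * (rexp (-x ^ 2 / (4 * s)) * rexp (-(4 * s)⁻¹ * y ^ (2 : ℝ)) /
        ((Nat.factorial k : ℝ) * Real.Gamma (k + lam + 1 / 2))) := by ring
    _ = _ := by rw [key]; ring

lemma lintegral_heatTerm_mul_rpow (hlam : 0 < lam) {s : ℝ} (hs : 0 < s) (hx : 0 < x) (k : ℕ) :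
    ∫⁻ y in Ioi (0 : ℝ), ENNReal.ofReal (heatTerm lam s x y k * y ^ lam) =
      ENNReal.ofReal (x ^ lam * rexp (-x ^ 2 / (4 * s)) *
        ((x ^ 2 / (4 * s)) ^ k / (Nat.factorial k : ℝ))) := by
  have h4s : 0 < (4 * s)⁻¹ := by positivity
  have hq : (-1 : ℝ) < 2 * k + 2 * lam := by
    have : (0 : ℝ) ≤ 2 * k + 2 * lam := by positivity
    linarith
  have hI : IntegrableOn (fun y => heatTerm lam s x y k * y ^ lam) (Ioi 0) :=
    IntegrableOn.congr_fun
      (Integrable.const_mul (integrableOn_rpow_mul_exp_neg_mul_rpow hq two_pos h4s) _)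
      (fun y hy => (heatTerm_mul_rpow hs hx hy k).symm) measurableSet_Ioi
  rw [← ofReal_integral_eq_lintegral_ofReal hI]
  · congr 1
    rw [setIntegral_congr_fun measurableSet_Ioi fun y hy => heatTerm_mul_rpow hs hx hy k,
      integral_const_mul, integral_rpow_mul_exp_neg_mul_rpow two_pos hq h4s]
    have hG : (2 * (k : ℝ) + 2 * lam + 1) / 2 = k + lam + 1 / 2 := by ring
    have hG0 := (Real.Gamma_pos_of_pos (s := k + lam + 1 / 2) (by positivity)).ne'
    have key : (4 * s) ^ (-(2 * k + lam + 1 / 2)) *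
        (4 * s)⁻¹ ^ (-(2 * (k : ℝ) + 2 * lam + 1) / 2) = ((4 * s) ^ k)⁻¹ := by
      rw [Real.inv_rpow (by positivity), ← Real.rpow_neg (by positivity),
        ← Real.rpow_add (by positivity), ← Real.rpow_natCast, ← Real.rpow_neg (by positivity)]
      congr 1; ring
    rw [hG, div_pow, div_eq_mul_inv ((x ^ 2) ^ k), ← key]
    field_simp
  · filter_upwards [ae_restrict_mem measurableSet_Ioi] with y hy
    have hy : 0 < y := hy
    have := heatTerm_nonneg hlam hs hx hy k
    simp only [Pi.zero_apply]
    positivity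

/-- The function `y ^ lam` is invariant under the Bessel–Poisson semigroup. -/
lemma lintegral_besselPoissonKernel_mul_rpow (hlam : 0 < lam) (hx : 0 < x) (ht : 0 < t) :
    ∫⁻ y in Ioi (0 : ℝ), ENNReal.ofReal (besselPoissonKernel lam t x y * y ^ lam) =
      ENNReal.ofReal (x ^ lam) := by
  set d : ℝ → ℝ := fun s => t / (2 * √π) * (s ^ (-(3 : ℝ) / 2) * rexp (-t ^ 2 / (4 * s))) with hd
  have hdm : Measurable d := by unfold d; fun_prop
  have hd0 {s : ℝ} (hs : 0 < s) : 0 ≤ d s := by unfold d; positivity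
  have hdint : ∫⁻ s in Ioi (0 : ℝ), ENNReal.ofReal (d s) = 1 := by
    have hA : 0 < t ^ 2 / 4 := by positivity
    have hform (s : ℝ) : d s =
        t / (2 * √π) * (s ^ (-((1 : ℝ) / 2 + 1)) * rexp (-(t ^ 2 / 4 / s))) := by
      simp only [hd]
      congr 3
      · norm_num
      · rw [div_div, neg_div]
    have hI : IntegrableOn d (Ioi 0) := by
      simp only [funext hform]
      exact (integrableOn_rpow_mul_exp_neg_div (by norm_num) hA).const_mul _
    rw [← ofReal_integral_eq_lintegral_ofReal hI, ← ENNReal.ofReal_one]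
    · congr 1
      simp only [funext hform]
      rw [integral_const_mul, integral_rpow_mul_exp_neg_div (by norm_num) hA,
        Real.Gamma_one_half_eq, Real.rpow_neg hA.le, ← Real.sqrt_eq_rpow,
        show t ^ 2 / 4 = (t / 2) ^ 2 by ring, Real.sqrt_sq (by positivity)]
      field_simp
    · filter_upwards [ae_restrict_mem measurableSet_Ioi] with s hs using hd0 hs
  have hmeas (k : ℕ) : Measurable fun p : ℝ × ℝ =>
      ENNReal.ofReal (d p.2 * (heatTerm lam p.2 x p.1 k * p.1 ^ lam)) := by
    have := measurable_heatTerm lam x k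
    fun_prop
  have hterm (y : ℝ) (hy : y ∈ Ioi (0 : ℝ)) :
      ENNReal.ofReal (besselPoissonKernel lam t x y * y ^ lam) =
        ∑' k, ∫⁻ s in Ioi (0 : ℝ), ENNReal.ofReal (d s * (heatTerm lam s x y k * y ^ lam)) := by
    have hy : 0 < y := hy
    have hs := (hasSum_besselPoissonKernel hlam hx hy ht).mul_right (y ^ lam)
    rw [← hs.tsum_eq, ENNReal.ofReal_tsum_of_nonneg _ hs.summable]
    · refine tsum_congr fun k => ?_
      have hI := ((integrableOn_subordinated_heatTerm (t := t) hlam hx hy k).const_mul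
        (t / (2 * √π))).mul_const (y ^ lam)
      rw [← integral_const_mul, ← integral_mul_const, ofReal_integral_eq_lintegral_ofReal hI]
      · simp only [hd]
        refine lintegral_congr fun s => ?_
        congr 1; ring
      · filter_upwards [ae_restrict_mem measurableSet_Ioi] with s hs
        have hs : 0 < s := hs
        have := heatTerm_nonneg hlam hs hx hy k
        simp only [Pi.zero_apply]
        positivity
    · intro k
      have : 0 ≤ ∫ s in Ioi (0 : ℝ),
          s ^ (-(3 : ℝ) / 2) * rexp (-t ^ 2 / (4 * s)) * heatTerm lam s x y k :=
        setIntegral_nonneg measurableSet_Ioi fun s hs => by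
          have hs : 0 < s := hs
          have := heatTerm_nonneg hlam hs hx hy k
          positivity
      positivity
  have hexp (s : ℝ) (hs : s ∈ Ioi (0 : ℝ)) :
      ∑' k : ℕ, ∫⁻ y in Ioi (0 : ℝ), ENNReal.ofReal (d s * (heatTerm lam s x y k * y ^ lam)) =
        ENNReal.ofReal (d s) * ENNReal.ofReal (x ^ lam) := by
    have hs : 0 < s := hs
    have hk (k : ℕ) :
        ∫⁻ y in Ioi (0 : ℝ), ENNReal.ofReal (d s * (heatTerm lam s x y k * y ^ lam)) =
        ENNReal.ofReal (d s) * ENNReal.ofReal (x ^ lam * rexp (-x ^ 2 / (4 * s)) *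
        ((x ^ 2 / (4 * s)) ^ k / (Nat.factorial k : ℝ))) := by
      rw [← lintegral_heatTerm_mul_rpow hlam hs hx k, ← lintegral_const_mul']
      · exact lintegral_congr fun y => ENNReal.ofReal_mul (hd0 hs)
      · exact ENNReal.ofReal_ne_top
    have hsum := (NormedSpace.expSeries_div_hasSum_exp (x ^ 2 / (4 * s))).mul_left
      (x ^ lam * rexp (-x ^ 2 / (4 * s)))
    simp only [hk]
    rw [ENNReal.tsum_mul_left, ← ENNReal.ofReal_tsum_of_nonneg (fun k => by positivity)
      hsum.summable, hsum.tsum_eq, ← Real.exp_eq_exp_ℝ, mul_assoc, ← Real.exp_add]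
    congr 2
    rw [neg_div, neg_add_cancel, Real.exp_zero, mul_one]
  calc _ = ∫⁻ y in Ioi (0 : ℝ), ∑' k, ∫⁻ s in Ioi (0 : ℝ),
        ENNReal.ofReal (d s * (heatTerm lam s x y k * y ^ lam)) :=
        setLIntegral_congr_fun measurableSet_Ioi hterm
    _ = ∑' k, ∫⁻ y in Ioi (0 : ℝ), ∫⁻ s in Ioi (0 : ℝ),
        ENNReal.ofReal (d s * (heatTerm lam s x y k * y ^ lam)) :=
        lintegral_tsum fun k => (hmeas k).lintegral_prod_right'.aemeasurable
    _ = ∑' k, ∫⁻ s in Ioi (0 : ℝ), ∫⁻ y in Ioi (0 : ℝ),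
        ENNReal.ofReal (d s * (heatTerm lam s x y k * y ^ lam)) :=
        tsum_congr fun k => lintegral_lintegral_swap (hmeas k).aemeasurable
    _ = ∫⁻ s in Ioi (0 : ℝ), ∑' k, ∫⁻ y in Ioi (0 : ℝ),
        ENNReal.ofReal (d s * (heatTerm lam s x y k * y ^ lam)) :=
        (lintegral_tsum fun k => (hmeas k).lintegral_prod_left'.aemeasurable).symm
    _ = ∫⁻ s in Ioi (0 : ℝ), ENNReal.ofReal (d s) * ENNReal.ofReal (x ^ lam) :=
        setLIntegral_congr_fun measurableSet_Ioi hexp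
    _ = _ := by
      rw [lintegral_mul_const' _ _ ENNReal.ofReal_ne_top, hdint, one_mul]

end Mass

section Extension

variable {lam t x y : ℝ} {u : ℝ → ℝ}

/-- The factor of the Bessel–Poisson kernel depending only on `y`. -/
def poissonWeight (lam y : ℝ) : ℝ := y ^ lam * (1 + y ^ 2) ^ (-(lam + 1))

lemma poissonWeight_nonneg (hy : 0 < y) : 0 ≤ poissonWeight lam y := by
  unfold poissonWeight; positivity

lemma inv_one_add_sq_mem_Icc (y : ℝ) : (1 + y ^ 2)⁻¹ ∈ Icc (0 : ℝ) 1 :=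
  ⟨by positivity, inv_le_one_of_one_le₀ (by nlinarith [sq_nonneg y])⟩

lemma measurable_poissonWeight : Measurable (poissonWeight lam) := by
  unfold poissonWeight; fun_prop

lemma poissonWeight_le (hlam : 0 < lam) (hy : 0 < y) :
    poissonWeight lam y ≤ 2 ^ (lam + 1) / (1 + y) ^ (1 + lam) := by
  have h1 : y ^ lam ≤ (1 + y) ^ lam := by gcongr; linarith
  have h2 : (1 + y ^ 2) ^ (-(lam + 1)) ≤ ((1 + y) ^ 2 / 2) ^ (-(lam + 1)) :=
    Real.rpow_le_rpow_of_nonpos (by positivity) (by nlinarith [sq_nonneg (y - 1)]) (by linarith)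
  have h3 : ((1 + y) ^ 2 / 2) ^ (-(lam + 1)) =
      2 ^ (lam + 1) / ((1 + y) ^ (1 + lam) * (1 + y) ^ (1 + lam)) := by
    rw [Real.rpow_neg (by positivity), Real.div_rpow (by positivity) (by positivity), inv_div,
      pow_two, Real.mul_rpow (by positivity) (by positivity), add_comm lam 1]
  have h4 : (1 + y) ^ lam ≤ (1 + y) ^ (1 + lam) :=
    Real.rpow_le_rpow_of_exponent_le (by linarith) (by linarith)
  have h5 : 0 < (1 + y) ^ (1 + lam) := by positivity
  calc poissonWeight lam y
      ≤ (1 + y) ^ (1 + lam) * (2 ^ (lam + 1) / ((1 + y) ^ (1 + lam) * (1 + y) ^ (1 + lam))) := by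
        unfold poissonWeight
        rw [← h3]
        exact mul_le_mul (h1.trans h4) h2 (by positivity) (by positivity)
    _ = _ := by field_simp

lemma integrableOn_poissonWeight_mul (hlam : 0 < lam) (hu : ContinuousOn u (Ioi 0))
    (huL : IntegrableOn (fun y => |u y| / (1 + y) ^ (1 + lam)) (Ioi 0)) :
    IntegrableOn (fun y => poissonWeight lam y * u y) (Ioi 0) := by
  refine Integrable.mono' (Integrable.const_mul huL (2 ^ (lam + 1)))
    (measurable_poissonWeight.aestronglyMeasurable.mul
      (hu.aestronglyMeasurable measurableSet_Ioi)) ?_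
  filter_upwards [ae_restrict_mem measurableSet_Ioi] with y hy
  rw [norm_mul, Real.norm_of_nonneg (poissonWeight_nonneg hy), Real.norm_eq_abs]
  calc _ ≤ 2 ^ (lam + 1) / (1 + y) ^ (1 + lam) * |u y| :=
        mul_le_mul_of_nonneg_right (poissonWeight_le hlam hy) (abs_nonneg _)
    _ = _ := by ring

lemma integrableOn_poissonWeight_mul_rpow (hlam : 0 < lam) :
    IntegrableOn (fun y => poissonWeight lam y * y ^ lam) (Ioi 0) := by
  refine Integrable.mono' (integrable_inv_one_add_sq.integrableOn (s := Ioi 0))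
    (measurable_poissonWeight.mul (by fun_prop)).aestronglyMeasurable ?_
  filter_upwards [ae_restrict_mem measurableSet_Ioi] with y hy
  have hy : 0 < y := hy
  have hw := poissonWeight_nonneg (lam := lam) hy
  rw [Real.norm_of_nonneg (by positivity), poissonWeight]
  have h1 : y ^ lam * y ^ lam ≤ (1 + y ^ 2) ^ lam := by
    rw [← Real.mul_rpow hy.le hy.le]
    gcongr
    nlinarith
  calc _ = y ^ lam * y ^ lam * (1 + y ^ 2) ^ (-(lam + 1)) := by ring
    _ ≤ (1 + y ^ 2) ^ lam * (1 + y ^ 2) ^ (-(lam + 1)) := by gcongr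
    _ = (1 + y ^ 2)⁻¹ := by
      rw [← Real.rpow_add (by positivity), ← Real.rpow_neg_one]
      congr 1
      ring

lemma besselPoissonKernel_mul_eq (hlam : 0 < lam) (hx : 0 < x) (ht : 0 < t)
    (hy : y ∈ Ioi (0 : ℝ)) : besselPoissonKernel lam t x y * u y =
      poissonWeight lam y * u y * poissonProfile lam x t (1 + y ^ 2)⁻¹ := by
  rw [besselPoissonKernel_eq hlam hx hy ht, poissonWeight]
  ring

lemma prod_subset_profileDomain :
    (Ioi (0 : ℝ) ×ˢ Ioi (0 : ℝ)) ×ˢ Icc (0 : ℝ) 1 ⊆ profileDomain :=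
  fun _ hz => mem_profileDomain hz.1.1 hz.1.2 hz.2

lemma integrableOn_besselPoissonKernel_mul (hlam : 0 < lam) (hx : 0 < x) (ht : 0 < t)
    (hu : IntegrableOn (fun y => poissonWeight lam y * u y) (Ioi 0)) :
    IntegrableOn (fun y => besselPoissonKernel lam t x y * u y) (Ioi 0) := by
  refine IntegrableOn.congr_fun ?_ (fun y hy => (besselPoissonKernel_mul_eq hlam hx ht hy).symm)
    measurableSet_Ioi
  exact integrable_param (p := (x, t)) (a := fun y : ℝ => (1 + y ^ 2)⁻¹)
    (isOpen_Ioi.prod isOpen_Ioi) isCompact_Icc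
    prod_subset_profileDomain (contDiffOn_poissonProfile hlam 0).continuousOn (by fun_prop)
    inv_one_add_sq_mem_Icc hu ⟨hx, ht⟩

lemma poissonSemigroup_eq (hlam : 0 < lam) (hx : 0 < x) (ht : 0 < t) :
    poissonSemigroup lam u t x = ∫ y in Ioi (0 : ℝ),
      poissonWeight lam y * u y * poissonProfile lam x t (1 + y ^ 2)⁻¹ :=
  setIntegral_congr_fun measurableSet_Ioi fun _ hy => besselPoissonKernel_mul_eq hlam hx ht hy

lemma contDiffOn_poissonSemigroup (hlam : 0 < lam)
    (hu : IntegrableOn (fun y => poissonWeight lam y * u y) (Ioi 0)) (n : ℕ) :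
    ContDiffOn ℝ n (fun p : ℝ × ℝ => poissonSemigroup lam u p.2 p.1)
      (Ioi (0 : ℝ) ×ˢ Ioi (0 : ℝ)) :=
  (contDiffOn_integral_param (a := fun y : ℝ => (1 + y ^ 2)⁻¹)
    (isOpen_Ioi.prod isOpen_Ioi) isCompact_Icc isOpen_profileDomain
    prod_subset_profileDomain (by fun_prop) inv_one_add_sq_mem_Icc hu n
    (contDiffOn_poissonProfile hlam n)).congr fun _ hp => poissonSemigroup_eq hlam hp.1 hp.2

lemma poissonSemigroup_pde (hlam : 0 < lam) (hx : 0 < x) (ht : 0 < t)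
    (hu : IntegrableOn (fun y => poissonWeight lam y * u y) (Ioi 0)) :
    deriv (deriv (fun s => poissonSemigroup lam u s x)) t +
      deriv (deriv (fun z => poissonSemigroup lam u t z)) x -
      lam * (lam - 1) / x ^ 2 * poissonSemigroup lam u t x = 0 := by
  have hsmooth := contDiffOn_poissonProfile hlam 2
  have ha : Measurable fun y : ℝ => (1 + y ^ 2)⁻¹ := by fun_prop
  have hct : Continuous fun z : ℝ × ℝ => ((x, z.1), z.2) := by fun_prop
  have hcx : Continuous fun z : ℝ × ℝ => ((z.1, t), z.2) := by fun_prop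
  obtain ⟨it, et⟩ := deriv_deriv_integral_param (O := Ioi 0) isOpen_Ioi isCompact_Icc
    (isOpen_profileDomain.preimage hct)
    (fun z hz => mem_profileDomain hx hz.1 hz.2) ha inv_one_add_sq_mem_Icc hu
    (hsmooth.comp (f := fun z : ℝ × ℝ => ((x, z.1), z.2)) (by fun_prop) fun _ hz => hz) ht
  obtain ⟨ix, ex⟩ := deriv_deriv_integral_param (O := Ioi 0) isOpen_Ioi isCompact_Icc
    (isOpen_profileDomain.preimage hcx)
    (fun z hz => mem_profileDomain hz.1 ht hz.2) ha inv_one_add_sq_mem_Icc hu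
    (hsmooth.comp (f := fun z : ℝ × ℝ => ((z.1, t), z.2)) (by fun_prop) fun _ hz => hz) hx
  have i0 := (integrableOn_besselPoissonKernel_mul hlam hx ht hu).congr_fun
    (fun y hy => besselPoissonKernel_mul_eq hlam hx ht hy) measurableSet_Ioi
  simp only [Function.comp_def] at it et ix ex
  have ht' : (fun s => poissonSemigroup lam u s x) =ᶠ[nhds t] fun s => ∫ y in Ioi (0 : ℝ),
      poissonWeight lam y * u y * poissonProfile lam x s (1 + y ^ 2)⁻¹ := by
    filter_upwards [isOpen_Ioi.mem_nhds ht] with s hs using poissonSemigroup_eq hlam hx hs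
  have hx' : (fun z => poissonSemigroup lam u t z) =ᶠ[nhds x] fun z => ∫ y in Ioi (0 : ℝ),
      poissonWeight lam y * u y * poissonProfile lam z t (1 + y ^ 2)⁻¹ := by
    filter_upwards [isOpen_Ioi.mem_nhds hx] with z hz using poissonSemigroup_eq hlam hz ht
  rw [ht'.deriv.deriv_eq, hx'.deriv.deriv_eq, et, ex, poissonSemigroup_eq hlam hx ht,
    ← integral_const_mul, ← integral_add it ix, ← integral_sub ?_ (i0.const_mul _)]
  swap
  · exact it.add ix
  refine integral_eq_zero_of_ae (Eventually.of_forall fun y => ?_)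
  have h := poissonProfile_pde hlam hx ht (inv_one_add_sq_mem_Icc y)
  simp only [Pi.zero_apply]
  linear_combination poissonWeight lam y * u y * h

lemma besselPoissonKernel_nonneg (hlam : 0 < lam) (hx : 0 < x) (hy : 0 < y) (ht : 0 < t) :
    0 ≤ besselPoissonKernel lam t x y := by
  have ha := inv_one_add_sq_mem_Icc y
  have h1 : 0 ≤ 1 - (1 + y ^ 2)⁻¹ := by linarith [ha.2]
  have h2 := (mem_profileDomain hx ht ha).2.2.1
  simp only at h2
  have h3 := (ratioFour_poissonCoef hlam).powerSum_nonneg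
    (w := (1 + y ^ 2)⁻¹ * (1 - (1 + y ^ 2)⁻¹) * x ^ 2 / interpDenom x t (1 + y ^ 2)⁻¹ ^ 2)
    (by positivity)
  rw [besselPoissonKernel_eq hlam hx hy ht, poissonProfile]
  positivity

lemma kernel_arg_le {δ : ℝ} (hx : 0 < x) (hy : 0 < y) (hδ : 0 < δ) (hxy : δ ≤ |y - x|) :
    (x * y) ^ 2 / (x ^ 2 + y ^ 2 + t ^ 2) ^ 2 ≤ 1 / 4 * (1 - (δ / (2 * x + δ)) ^ 2) := by
  have hS : 0 < x ^ 2 + y ^ 2 := by positivity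
  have h0 : (x * y) ^ 2 / (x ^ 2 + y ^ 2 + t ^ 2) ^ 2 ≤ (x * y) ^ 2 / (x ^ 2 + y ^ 2) ^ 2 := by
    gcongr _ / ?_ ^ 2
    linarith [sq_nonneg t]
  have h1 : δ * (x + y) ≤ |y - x| * (2 * x + δ) := by
    have h2 : x + y ≤ 2 * x + |y - x| := by linarith [le_abs_self (y - x)]
    nlinarith
  have h2 : δ / (2 * x + δ) ≤ |y - x| * (x + y) / (x ^ 2 + y ^ 2) := by
    rw [div_le_div_iff₀ (by positivity) hS]
    calc δ * (x ^ 2 + y ^ 2) ≤ δ * (x + y) * (x + y) := by nlinarith [mul_pos hδ (mul_pos hx hy)]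
      _ ≤ |y - x| * (2 * x + δ) * (x + y) := by gcongr
      _ = _ := by ring
  have h3 : (δ / (2 * x + δ)) ^ 2 ≤ (|y - x| * (x + y) / (x ^ 2 + y ^ 2)) ^ 2 := by gcongr
  have h4 : (x * y) ^ 2 / (x ^ 2 + y ^ 2) ^ 2 =
      1 / 4 * (1 - (|y - x| * (x + y) / (x ^ 2 + y ^ 2)) ^ 2) := by
    rw [div_pow, mul_pow |y - x|, sq_abs]
    field_simp
    ring
  linarith

lemma exists_besselPoissonKernel_le (hlam : 0 < lam) (hx : 0 < x) {δ : ℝ} (hδ : 0 < δ) :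
    ∃ C, 0 ≤ C ∧ ∀ t > 0, ∀ y > 0, δ ≤ |y - x| →
      besselPoissonKernel lam t x y ≤ t * C * poissonWeight lam y := by
  set θ := 1 / 4 * (1 - (δ / (2 * x + δ)) ^ 2) with hθ
  have hc := ratioFour_poissonCoef hlam
  have hq : 0 < δ / (2 * x + δ) := by positivity
  have hq1 : δ / (2 * x + δ) < 1 := by rw [div_lt_one (by positivity)]; linarith
  have hθ1 : θ < 1 / 4 := by nlinarith
  have hθ0 : 0 ≤ θ := by nlinarith
  have hm : 0 < min (x ^ 2) 1 := by positivity
  have hθs := hc.powerSum_nonneg hθ0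
  refine ⟨2 / √π * (x ^ lam * min (x ^ 2) 1 ^ (-(lam + 1))) * powerSum (poissonCoef lam) θ,
    by positivity, fun t ht y hy hxy => ?_⟩
  have ha := inv_one_add_sq_mem_Icc y
  have h1 : 0 ≤ 1 - (1 + y ^ 2)⁻¹ := by linarith [ha.2]
  have hT : min (x ^ 2) 1 ≤ interpDenom x t (1 + y ^ 2)⁻¹ := by
    unfold interpDenom
    nlinarith [mul_le_mul_of_nonneg_left (min_le_left (x ^ 2) 1) ha.1,
      mul_le_mul_of_nonneg_left (min_le_right (x ^ 2) 1) h1, mul_nonneg ha.1 (sq_nonneg t)]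
  have hT0 := hm.trans_le hT
  have hw : (1 + y ^ 2)⁻¹ * (1 - (1 + y ^ 2)⁻¹) * x ^ 2 / interpDenom x t (1 + y ^ 2)⁻¹ ^ 2 =
      (x * y) ^ 2 / (x ^ 2 + y ^ 2 + t ^ 2) ^ 2 := by
    have hρ : 0 < 1 + y ^ 2 := by positivity
    have hS : 0 < x ^ 2 + y ^ 2 + t ^ 2 := by positivity
    have hT' : interpDenom x t (1 + y ^ 2)⁻¹ = (x ^ 2 + y ^ 2 + t ^ 2) / (1 + y ^ 2) := by
      unfold interpDenom; field_simp; ring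
    rw [hT']
    field_simp
    ring
  have hsum : powerSum (poissonCoef lam) ((x * y) ^ 2 / (x ^ 2 + y ^ 2 + t ^ 2) ^ 2) ≤
      powerSum (poissonCoef lam) θ :=
    hc.powerSum_mono (by positivity) (kernel_arg_le hx hy hδ hxy) hθ1
  have hsum0 : 0 ≤ powerSum (poissonCoef lam) ((x * y) ^ 2 / (x ^ 2 + y ^ 2 + t ^ 2) ^ 2) :=
    hc.powerSum_nonneg (by positivity)
  have hpow : interpDenom x t (1 + y ^ 2)⁻¹ ^ (-(lam + 1)) ≤ min (x ^ 2) 1 ^ (-(lam + 1)) :=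
    Real.rpow_le_rpow_of_nonpos hm hT (by linarith)
  have hweight := poissonWeight_nonneg (lam := lam) hy
  rw [besselPoissonKernel_eq hlam hx hy ht, ← poissonWeight, poissonProfile, hw]
  calc _ ≤ poissonWeight lam y * (2 / √π * (t * x ^ lam * min (x ^ 2) 1 ^ (-(lam + 1))) *
        powerSum (poissonCoef lam) θ) := by gcongr
    _ = _ := by ring

lemma integral_besselPoissonKernel_mul_rpow (hlam : 0 < lam) (hx : 0 < x) (ht : 0 < t) :
    ∫ y in Ioi (0 : ℝ), besselPoissonKernel lam t x y * y ^ lam = x ^ lam := by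
  rw [integral_eq_lintegral_of_nonneg_ae, lintegral_besselPoissonKernel_mul_rpow hlam hx ht,
    ENNReal.toReal_ofReal (by positivity)]
  · filter_upwards [ae_restrict_mem measurableSet_Ioi] with y hy
    have hy : 0 < y := hy
    have := besselPoissonKernel_nonneg hlam hx hy ht
    simp only [Pi.zero_apply]
    positivity
  · exact (integrableOn_besselPoissonKernel_mul hlam hx ht
      (integrableOn_poissonWeight_mul_rpow hlam)).aestronglyMeasurable

lemma tendsto_poissonSemigroup_zero (hlam : 0 < lam) (hx : 0 < x) (hc : ContinuousAt u x)
    (hux : u x = 0) (hu : IntegrableOn (fun y => poissonWeight lam y * u y) (Ioi 0)) :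
    Tendsto (fun t => poissonSemigroup lam u t x) (nhdsWithin 0 (Ioi 0)) (nhds 0) := by
  rw [Metric.tendsto_nhds]
  intro ε hε
  have hxl : 0 < x ^ lam := by positivity
  have hratio : Tendsto (fun y => u y / y ^ lam) (nhds x) (nhds 0) := by
    have := hc.div (Real.continuousAt_rpow_const x lam (Or.inl hx.ne')) hxl.ne'
    simpa [ContinuousAt, hux, Pi.div_def] using this
  obtain ⟨δ, hδ, hball⟩ := Metric.eventually_nhds_iff.1
    (Metric.tendsto_nhds.1 hratio (ε / (2 * x ^ lam)) (by positivity))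
  obtain ⟨C, hC0, hC⟩ := exists_besselPoissonKernel_le hlam hx hδ
  set J := ∫ y in Ioi (0 : ℝ), ‖poissonWeight lam y * u y‖ with hJ
  have hsmall : ∀ᶠ t in nhdsWithin (0 : ℝ) (Ioi 0), t * C * J < ε / 2 := by
    have hcont : Tendsto (fun t : ℝ => t * C * J) (nhdsWithin 0 (Ioi 0)) (nhds (0 * C * J)) :=
      (Continuous.tendsto (by fun_prop) 0).mono_left nhdsWithin_le_nhds
    exact hcont.eventually_lt_const (by simpa using half_pos hε)
  filter_upwards [hsmall, self_mem_nhdsWithin] with t hts ht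
  have ht : 0 < t := ht
  have i1 := integrableOn_besselPoissonKernel_mul hlam hx ht
    (integrableOn_poissonWeight_mul_rpow hlam)
  have hle : ‖poissonSemigroup lam u t x‖ ≤ ∫ y in Ioi (0 : ℝ),
      (ε / (2 * x ^ lam) * (besselPoissonKernel lam t x y * y ^ lam) +
        t * C * ‖poissonWeight lam y * u y‖) := by
    refine norm_integral_le_of_norm_le ((i1.const_mul _).add (hu.norm.const_mul _)) ?_
    filter_upwards [ae_restrict_mem measurableSet_Ioi] with y hy
    have hy : 0 < y := hy
    have hP := besselPoissonKernel_nonneg hlam hx hy ht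
    have hw := poissonWeight_nonneg (lam := lam) hy
    have hyl : 0 < y ^ lam := by positivity
    rw [norm_mul, Real.norm_of_nonneg hP, norm_mul, Real.norm_of_nonneg hw]
    rcases lt_or_ge |y - x| δ with h | h
    · have h1 := hball (y := y) (by rwa [Real.dist_eq])
      rw [dist_zero_right, norm_div, Real.norm_of_nonneg hyl.le, div_lt_iff₀ hyl] at h1
      have h2 := mul_le_mul_of_nonneg_left h1.le hP
      have h3 : 0 ≤ t * C * (poissonWeight lam y * ‖u y‖) := by positivity
      linarith
    · have h2 := mul_le_mul_of_nonneg_right (hC t ht y hy h) (norm_nonneg (u y))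
      have h3 : 0 ≤ ε / (2 * x ^ lam) * (besselPoissonKernel lam t x y * y ^ lam) := by positivity
      linarith
  rw [integral_add (i1.const_mul _) (hu.norm.const_mul _), integral_const_mul,
    integral_const_mul, integral_besselPoissonKernel_mul_rpow hlam hx ht, ← hJ] at hle
  rw [dist_zero_right]
  have h4 : ε / (2 * x ^ lam) * x ^ lam = ε / 2 := by field_simp
  linarith

lemma tendsto_poissonSemigroup (hlam : 0 < lam) (hx : 0 < x) (hc : ContinuousAt u x)
    (hu : IntegrableOn (fun y => poissonWeight lam y * u y) (Ioi 0)) :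
    Tendsto (fun t => poissonSemigroup lam u t x) (nhdsWithin 0 (Ioi 0)) (nhds (u x)) := by
  have hxl : 0 < x ^ lam := by positivity
  set c := u x / x ^ lam with hcdef
  have hpow := integrableOn_poissonWeight_mul_rpow hlam
  have h := tendsto_poissonSemigroup_zero (u := fun y => u y - c * y ^ lam) hlam hx
    (hc.sub ((Real.continuousAt_rpow_const x lam (Or.inl hx.ne')).const_mul c))
    (by simp only [hcdef]; field_simp; ring)
    ((hu.sub (hpow.const_mul c)).congr (Eventually.of_forall fun y => by
      simp only [Pi.sub_apply]; ring))
  have h' := h.add_const (u x)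
  rw [zero_add] at h'
  refine h'.congr' ?_
  filter_upwards [self_mem_nhdsWithin] with t ht
  have ht : 0 < t := ht
  have i1 := integrableOn_besselPoissonKernel_mul hlam hx ht hu
  have i2 := (integrableOn_besselPoissonKernel_mul hlam hx ht hpow).const_mul c
  have hsub : poissonSemigroup lam (fun y => u y - c * y ^ lam) t x =
      poissonSemigroup lam u t x - c * x ^ lam := by
    rw [← integral_besselPoissonKernel_mul_rpow hlam hx ht, ← integral_const_mul]
    unfold poissonSemigroup
    rw [← integral_sub i1 i2]
    congr 1 with y
    ring
  rw [hsub, hcdef]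
  field_simp
  ring

end Extension

/-- The Bessel harmonic extension of `f ∈ C^α_+`: well defined, `C²`, solves the
extension equation and attains the boundary datum. -/
theorem bessel_harmonic_extension
    (lam α : ℝ) (hlam : 0 < lam) (hα0 : 0 < α) (hα1 : α < 1)
    (f : ℝ → ℝ) (hf : MemHolderPlus α f)
    (hfL : IntegrableOn (fun y => |f y| / (1 + y) ^ (1 + lam)) (Set.Ioi 0)) :
    (∀ x : ℝ, 0 < x → ∀ t : ℝ, 0 < t →
      IntegrableOn (fun y => besselPoissonKernel lam t x y * f y) (Set.Ioi 0)) ∧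
    ContDiffOn ℝ 2 (fun p : ℝ × ℝ => poissonSemigroup lam f p.2 p.1)
      (Set.Ioi (0 : ℝ) ×ˢ Set.Ioi (0 : ℝ)) ∧
    (∀ x : ℝ, 0 < x → ∀ t : ℝ, 0 < t →
      deriv (deriv (fun s => poissonSemigroup lam f s x)) t +
          deriv (deriv (fun z => poissonSemigroup lam f t z)) x -
          lam * (lam - 1) / x ^ 2 * poissonSemigroup lam f t x = 0) ∧
    (∀ x : ℝ, 0 < x →
      Tendsto (fun t => poissonSemigroup lam f t x) (nhdsWithin 0 (Set.Ioi 0))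
        (nhds (f x))) := by
  have hu := integrableOn_poissonWeight_mul hlam hf.1 hfL
  exact ⟨fun x hx t ht => integrableOn_besselPoissonKernel_mul hlam hx ht hu,
    contDiffOn_poissonSemigroup hlam hu 2,
    fun x hx t ht => poissonSemigroup_pde hlam hx ht hu,
    fun x hx => tendsto_poissonSemigroup hlam hx (hf.1.continuousAt (isOpen_Ioi.mem_nhds hx)) hu⟩
end
end

section
/- Let λ > 0. There exists a constant C = C(λ) > 0 such that for all x, y, t > 0: (a) P_t^λ(x,y) ≤ C · t/(t+|x−y|)² · (min{ min(x,y)/(t+|x−y|), 1 })^λ, and (b) P_t^λ(x,y) ≤ C · t (xy)^λ/(t+|x−y|)^{2(λ+1)}. -/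
open Real MeasureTheory Set Filter

noncomputable section

lemma exists_Gamma_add_half_lower_of_le_one {lam : ℝ} (h0 : 0 ≤ lam) (h1 : lam ≤ 1) :
    ∃ c : ℝ, 0 < c ∧ ∀ k : ℕ,
      c * Real.Gamma (k + 1 / 2) * ((k : ℝ) + 1) ^ lam ≤ Real.Gamma (k + lam + 1 / 2) := by
  have hG : 0 < Real.Gamma (1 / 2) := Real.Gamma_pos_of_pos (by norm_num)
  have hL : 0 < Real.Gamma (lam + 1 / 2) := Real.Gamma_pos_of_pos (by linarith)
  refine ⟨Real.Gamma (lam + 1 / 2) / Real.Gamma (1 / 2), by positivity, fun k => ?_⟩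
  induction k with
  | zero => simp [div_mul_cancel₀ _ (show Real.Gamma 2⁻¹ ≠ 0 by simpa using hG.ne')]
  | succ k ih =>
    set c := Real.Gamma (lam + 1 / 2) / Real.Gamma (1 / 2)
    have hΓ : 0 < Real.Gamma (k + lam + 1 / 2) := Real.Gamma_pos_of_pos (by positivity)
    have e1 : Real.Gamma (((k + 1 : ℕ) : ℝ) + 1 / 2)
        = ((k : ℝ) + 1 / 2) * Real.Gamma (k + 1 / 2) := by
      rw [← Real.Gamma_add_one (by positivity)]; push_cast; ring_nf
    have e2 : Real.Gamma (((k + 1 : ℕ) : ℝ) + lam + 1 / 2)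
        = ((k : ℝ) + lam + 1 / 2) * Real.Gamma (k + lam + 1 / 2) := by
      rw [← Real.Gamma_add_one (by positivity)]; push_cast; ring_nf
    have e3 : (((k + 1 : ℕ) : ℝ) + 1) ^ lam
        = ((k : ℝ) + 1) ^ lam * (1 + 1 / ((k : ℝ) + 1)) ^ lam := by
      rw [← Real.mul_rpow (by positivity) (by positivity)]
      congr 1; push_cast; field_simp
    have hB : (1 + 1 / ((k : ℝ) + 1)) ^ lam ≤ 1 + lam * (1 / ((k : ℝ) + 1)) :=
      rpow_one_add_le_one_add_mul_self
        (by have : (0 : ℝ) ≤ 1 / ((k : ℝ) + 1) := by positivity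
            linarith) h0 h1
    have hk : ((k : ℝ) + 1 / 2) * (1 + lam * (1 / ((k : ℝ) + 1))) ≤ k + lam + 1 / 2 := by
      have : ((k : ℝ) + 1 / 2) * (1 / ((k : ℝ) + 1)) ≤ 1 := by
        rw [mul_one_div, div_le_one (by positivity)]; linarith
      nlinarith
    rw [e1, e2, e3]
    calc c * (((k : ℝ) + 1 / 2) * Real.Gamma (k + 1 / 2)) *
          (((k : ℝ) + 1) ^ lam * (1 + 1 / ((k : ℝ) + 1)) ^ lam)
        = (((k : ℝ) + 1 / 2) * (1 + 1 / ((k : ℝ) + 1)) ^ lam) *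
          (c * Real.Gamma (k + 1 / 2) * ((k : ℝ) + 1) ^ lam) := by ring
      _ ≤ (((k : ℝ) + 1 / 2) * (1 + lam * (1 / ((k : ℝ) + 1)))) *
          Real.Gamma (k + lam + 1 / 2) := by gcongr
      _ ≤ _ := by gcongr

lemma exists_Gamma_add_half_lower {lam : ℝ} (h0 : 0 ≤ lam) :
    ∃ c : ℝ, 0 < c ∧ ∀ k : ℕ,
      c * Real.Gamma (k + 1 / 2) * ((k : ℝ) + 1) ^ lam ≤ Real.Gamma (k + lam + 1 / 2) := by
  obtain ⟨n, hn⟩ := exists_nat_ge lam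
  induction n generalizing lam with
  | zero => exact exists_Gamma_add_half_lower_of_le_one h0 (by norm_num at hn; linarith)
  | succ n ih =>
    rcases le_total lam 1 with h1 | h1
    · exact exists_Gamma_add_half_lower_of_le_one h0 h1
    obtain ⟨c, hc, H⟩ := ih (lam := lam - 1) (by linarith) (by push_cast at hn; linarith)
    refine ⟨c / 2, by positivity, fun k => ?_⟩
    have hpos : 0 < (k : ℝ) + (lam - 1) + 1 / 2 := by positivity
    have e1 : Real.Gamma (k + lam + 1 / 2)
        = ((k : ℝ) + (lam - 1) + 1 / 2) * Real.Gamma (k + (lam - 1) + 1 / 2) := by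
      rw [← Real.Gamma_add_one hpos.ne']; ring_nf
    have e2 : ((k : ℝ) + 1) ^ lam = ((k : ℝ) + 1) ^ (lam - 1) * ((k : ℝ) + 1) := by
      rw [← Real.rpow_add_one (by positivity)]; ring_nf
    have hΓ : 0 < Real.Gamma (k + 1 / 2) := Real.Gamma_pos_of_pos (by positivity)
    rw [e1, e2]
    calc c / 2 * Real.Gamma (k + 1 / 2) * (((k : ℝ) + 1) ^ (lam - 1) * ((k : ℝ) + 1))
        = (((k : ℝ) + 1) / 2) * (c * Real.Gamma (k + 1 / 2) * ((k : ℝ) + 1) ^ (lam - 1)) := by ring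
      _ ≤ _ := by
        gcongr
        · linarith [(Nat.cast_nonneg k : (0 : ℝ) ≤ k)]
        · exact H k

lemma four_pow_mul_factorial_mul_Gamma_add_half (k : ℕ) :
    4 ^ k * (Nat.factorial k : ℝ) * Real.Gamma (k + 1 / 2)
      = √π * (Nat.factorial (2 * k) : ℝ) := by
  induction k with
  | zero => simpa using Real.Gamma_one_half_eq
  | succ k ih =>
    have e1 : Real.Gamma (((k + 1 : ℕ) : ℝ) + 1 / 2)
        = ((k : ℝ) + 1 / 2) * Real.Gamma (k + 1 / 2) := by
      rw [← Real.Gamma_add_one (by positivity)]; push_cast; ring_nf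
    rw [e1, show 2 * (k + 1) = 2 * k + 1 + 1 by ring, Nat.factorial_succ, Nat.factorial_succ,
      Nat.factorial_succ]
    push_cast
    linear_combination (2 * (k : ℝ) + 1 + 1) * (2 * k + 1) * ih

lemma factorial_two_mul_add_le (k N : ℕ) :
    (Nat.factorial (2 * k + N) : ℝ)
      ≤ Nat.factorial (2 * k) * (((N : ℝ) + 2) ^ N * ((k : ℝ) + 1) ^ N) := by
  rw [← mul_pow]
  have h : Nat.factorial (2 * k + N) ≤ Nat.factorial (2 * k) * ((N + 2) * (k + 1)) ^ N := by
    rw [← Nat.factorial_mul_ascFactorial]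
    refine Nat.mul_le_mul_left _ ((Nat.ascFactorial_le_pow_add _ _).trans ?_)
    exact Nat.pow_le_pow_left (by nlinarith) _
  exact_mod_cast h

/-- The series of `z ^ (2 k + N) / (2 k + N)!` has partial sums bounded by `exp z`. -/
lemma sum_pow_two_mul_add_div_factorial_le (z : ℝ) (hz : 0 ≤ z) (N n : ℕ) :
    ∑ k ∈ Finset.range n, z ^ (2 * k + N) / (Nat.factorial (2 * k + N) : ℝ) ≤ Real.exp z := by
  have hs := Real.summable_pow_div_factorial z
  have hinj : Function.Injective (fun k : ℕ => 2 * k + N) := fun a b h => by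
    simp only at h; omega
  calc _ ≤ ∑' k : ℕ, z ^ (2 * k + N) / (Nat.factorial (2 * k + N) : ℝ) :=
        (hs.comp_injective hinj).sum_le_tsum _ fun k _ => by positivity
    _ ≤ ∑' k : ℕ, z ^ k / (Nat.factorial k : ℝ) :=
        tsum_comp_le_tsum_of_inj hs (fun k => by positivity) hinj
    _ = Real.exp z := by rw [Real.exp_eq_exp_ℝ, NormedSpace.exp_eq_tsum_div]

lemma besselI_term_nonneg {lam z : ℝ} (hlam : 0 < lam) (hz : 0 < z) (k : ℕ) :
    0 ≤ (z / 2) ^ (2 * (k : ℝ) + (lam - 1 / 2)) /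
      ((Nat.factorial k : ℝ) * Real.Gamma ((k : ℝ) + (lam - 1 / 2) + 1)) := by
  have : 0 < Real.Gamma ((k : ℝ) + (lam - 1 / 2) + 1) :=
    Real.Gamma_pos_of_pos (by linarith [(Nat.cast_nonneg k : (0 : ℝ) ≤ k)])
  positivity

lemma exists_besselI_term_le {lam : ℝ} (hlam : 0 < lam) :
    ∃ A : ℝ, 0 < A ∧ ∀ z : ℝ, 0 < z → ∀ k : ℕ,
      √z * ((z / 2) ^ (2 * (k : ℝ) + (lam - 1 / 2)) /
        ((Nat.factorial k : ℝ) * Real.Gamma ((k : ℝ) + (lam - 1 / 2) + 1)))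
      ≤ A * ((z / ((k : ℝ) + 1)) ^ lam * (z ^ (2 * k) / (Nat.factorial (2 * k) : ℝ))) := by
  obtain ⟨c, hc, H⟩ := exists_Gamma_add_half_lower hlam.le
  refine ⟨2 ^ (1 / 2 - lam) / (c * √π), by positivity, fun z hz k => ?_⟩
  have hG : 0 < Real.Gamma (k + 1 / 2) := Real.Gamma_pos_of_pos (by positivity)
  have e1 : √z * (z / 2) ^ (2 * (k : ℝ) + (lam - 1 / 2))
      = 2 ^ (1 / 2 - lam) * z ^ lam * (z ^ (2 * k) / 4 ^ k) := by
    rw [Real.div_rpow hz.le (by norm_num), Real.sqrt_eq_rpow, mul_div_assoc',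
      ← Real.rpow_add hz, show 1 / 2 + (2 * (k : ℝ) + (lam - 1 / 2)) = lam + (2 * k : ℕ) by
        push_cast; ring, Real.rpow_add hz, Real.rpow_natCast,
      show 2 * (k : ℝ) + (lam - 1 / 2) = (2 * k : ℕ) - (1 / 2 - lam) by push_cast; ring,
      Real.rpow_sub (by norm_num), Real.rpow_natCast, pow_mul (2 : ℝ)]
    norm_num
    field_simp
  rw [mul_div_assoc', e1, show (k : ℝ) + (lam - 1 / 2) + 1 = k + lam + 1 / 2 by ring]
  calc _ ≤ 2 ^ (1 / 2 - lam) * z ^ lam * (z ^ (2 * k) / 4 ^ k) /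
        ((Nat.factorial k : ℝ) * (c * Real.Gamma (k + 1 / 2) * ((k : ℝ) + 1) ^ lam)) := by
        gcongr; exact H k
    _ = 2 ^ (1 / 2 - lam) * z ^ lam * z ^ (2 * k) /
        (c * ((k : ℝ) + 1) ^ lam *
          (4 ^ k * (Nat.factorial k : ℝ) * Real.Gamma (k + 1 / 2))) := by
        field_simp
    _ = _ := by
        rw [four_pow_mul_factorial_mul_Gamma_add_half, Real.div_rpow hz.le (by positivity)]
        field_simp

lemma sqrt_mul_besselI_le_of_sum_le {lam z B : ℝ} (hlam : 0 < lam) (hz : 0 < z)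
    (h : ∀ n : ℕ, ∑ k ∈ Finset.range n, √z * ((z / 2) ^ (2 * (k : ℝ) + (lam - 1 / 2)) /
        ((Nat.factorial k : ℝ) * Real.Gamma ((k : ℝ) + (lam - 1 / 2) + 1))) ≤ B) :
    √z * besselI (lam - 1 / 2) z ≤ B := by
  rw [besselI, ← tsum_mul_left]
  exact Real.tsum_le_of_sum_range_le
    (fun k => mul_nonneg (Real.sqrt_nonneg _) (besselI_term_nonneg hlam hz k)) h

lemma exists_sqrt_mul_besselI_le_rpow {lam : ℝ} (hlam : 0 < lam) :
    ∃ K : ℝ, 0 < K ∧ ∀ z : ℝ, 0 < z →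
      √z * besselI (lam - 1 / 2) z ≤ K * (z ^ lam * Real.exp z) := by
  obtain ⟨A, hA, H⟩ := exists_besselI_term_le hlam
  refine ⟨A, hA, fun z hz => sqrt_mul_besselI_le_of_sum_le hlam hz fun n => ?_⟩
  calc _ ≤ ∑ k ∈ Finset.range n,
        A * z ^ lam * (z ^ (2 * k + 0) / (Nat.factorial (2 * k + 0) : ℝ)) := by
        refine Finset.sum_le_sum fun k _ => (H z hz k).trans ?_
        rw [mul_assoc A, add_zero]
        gcongr
        exact div_le_self hz.le (by linarith [(Nat.cast_nonneg k : (0 : ℝ) ≤ k)])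
    _ ≤ _ := by
        rw [← Finset.mul_sum, ← mul_assoc]
        gcongr
        exact sum_pow_two_mul_add_div_factorial_le z hz.le 0 n

lemma exists_sqrt_mul_besselI_le_exp {lam : ℝ} (hlam : 0 < lam) :
    ∃ K : ℝ, 0 < K ∧ ∀ z : ℝ, 0 < z →
      √z * besselI (lam - 1 / 2) z ≤ K * Real.exp z := by
  obtain ⟨A, hA, H⟩ := exists_besselI_term_le hlam
  obtain ⟨N, hN⟩ := exists_nat_ge lam
  refine ⟨A * (1 + ((N : ℝ) + 2) ^ N), by positivity,
    fun z hz => sqrt_mul_besselI_le_of_sum_le hlam hz fun n => ?_⟩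
  calc _ ≤ ∑ k ∈ Finset.range n,
        A * (z ^ (2 * k + 0) / (Nat.factorial (2 * k + 0) : ℝ) +
          ((N : ℝ) + 2) ^ N * (z ^ (2 * k + N) / (Nat.factorial (2 * k + N) : ℝ))) := by
        refine Finset.sum_le_sum fun k _ => (H z hz k).trans ?_
        gcongr
        have hr : 0 < z / ((k : ℝ) + 1) := by positivity
        have hle : (z / ((k : ℝ) + 1)) ^ lam ≤ 1 + (z / ((k : ℝ) + 1)) ^ N := by
          rcases le_total (z / ((k : ℝ) + 1)) 1 with h | h
          · have := Real.rpow_le_one hr.le h hlam.le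
            have : 0 < (z / ((k : ℝ) + 1)) ^ N := by positivity
            linarith
          · have := Real.rpow_le_rpow_of_exponent_le h hN
            rw [Real.rpow_natCast] at this
            linarith
        calc _ ≤ (1 + (z / ((k : ℝ) + 1)) ^ N) * (z ^ (2 * k) / (Nat.factorial (2 * k) : ℝ)) := by
              gcongr
          _ = z ^ (2 * k) / (Nat.factorial (2 * k) : ℝ) + ((N : ℝ) + 2) ^ N * (z ^ (2 * k + N) /
              (Nat.factorial (2 * k) * (((N : ℝ) + 2) ^ N * ((k : ℝ) + 1) ^ N))) := by
              rw [div_pow, pow_add]; field_simp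
          _ ≤ _ := by
              rw [add_zero]
              gcongr
              exact factorial_two_mul_add_le k N
    _ ≤ A * (Real.exp z + ((N : ℝ) + 2) ^ N * Real.exp z) := by
        rw [← Finset.mul_sum, Finset.sum_add_distrib, ← Finset.mul_sum]
        gcongr
        · exact sum_pow_two_mul_add_div_factorial_le z hz.le 0 n
        · exact sum_pow_two_mul_add_div_factorial_le z hz.le N n
    _ = _ := by ring

lemma integrableOn_rpow_mul_exp_neg_div_s10 {μ a : ℝ} (hμ : 0 ≤ μ) (ha : 0 < a) :
    IntegrableOn (fun s : ℝ => s ^ (-2 - μ) * Real.exp (-(a / s))) (Ioi 0) ∧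
      ∫ s in Ioi (0 : ℝ), s ^ (-2 - μ) * Real.exp (-(a / s))
        = (1 / a) ^ (μ + 1) * Real.Gamma (μ + 1) := by
  have hg : IntegrableOn (fun x : ℝ => x ^ μ * Real.exp (-(a * x))) (Ioi 0) := by
    simpa using integrableOn_rpow_mul_exp_neg_mul_rpow (p := 1) (s := μ) (b := a)
      (by linarith) one_pos ha
  have hcongr : ∀ s ∈ Ioi (0 : ℝ), s ^ ((-1 : ℝ) - 1) • ((s ^ (-1 : ℝ)) ^ μ *
      Real.exp (-(a * s ^ (-1 : ℝ)))) = s ^ (-2 - μ) * Real.exp (-(a / s)) := by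
    intro s hs
    rw [smul_eq_mul, ← mul_assoc, ← Real.rpow_mul (le_of_lt hs), ← Real.rpow_add hs,
      Real.rpow_neg_one, div_eq_mul_inv]
    ring_nf
  constructor
  · exact ((integrableOn_Ioi_comp_rpow_iff' _ (by norm_num : (-1 : ℝ) ≠ 0)).mpr hg).congr_fun
      hcongr measurableSet_Ioi
  · rw [← Real.integral_rpow_mul_exp_neg_mul_Ioi (by linarith) ha, add_sub_cancel_right,
      ← integral_comp_rpow_Ioi (fun x : ℝ => x ^ μ * Real.exp (-(a * x)))
        (by norm_num : (-1 : ℝ) ≠ 0)]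
    refine setIntegral_congr_fun measurableSet_Ioi fun s hs => ?_
    simpa using (hcongr s hs).symm

lemma besselI_nonneg {lam z : ℝ} (hlam : 0 < lam) (hz : 0 < z) :
    0 ≤ besselI (lam - 1 / 2) z :=
  tsum_nonneg (besselI_term_nonneg hlam hz)

lemma besselHeatKernel_le {lam μ K s x y : ℝ}
    (hK : ∀ z : ℝ, 0 < z → √z * besselI (lam - 1 / 2) z ≤ K * (z ^ μ * Real.exp z))
    (hs : 0 < s) (hx : 0 < x) (hy : 0 < y) :
    besselHeatKernel lam s x y ≤ K * 2 ^ (-1 / 2 - μ) * (x * y) ^ μ *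
      (s ^ (-1 / 2 - μ) * Real.exp (-((x - y) ^ 2 / (4 * s)))) := by
  have hz : 0 < x * y / (2 * s) := by positivity
  have e : √(x * y) / (2 * s) = (2 * s) ^ (-1 / 2 : ℝ) * √(x * y / (2 * s)) := by
    have h2 : √(2 * s) * √(2 * s) = 2 * s := Real.mul_self_sqrt (by positivity)
    have h3 : 0 < √(2 * s) := Real.sqrt_pos.mpr (by positivity)
    rw [neg_div, Real.rpow_neg (by positivity), ← Real.sqrt_eq_rpow,
      Real.sqrt_div (by positivity)]
    field_simp
    rw [sq, h2]
  rw [besselHeatKernel, e, mul_assoc _ (√_)]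
  calc _ ≤ (2 * s) ^ (-1 / 2 : ℝ) * (K * ((x * y / (2 * s)) ^ μ * Real.exp (x * y / (2 * s)))) *
        Real.exp (-(x ^ 2 + y ^ 2) / (4 * s)) := by
        exact mul_le_mul_of_nonneg_right
          (mul_le_mul_of_nonneg_left (hK _ hz) (by positivity)) (by positivity)
    _ = K * (x * y) ^ μ * ((2 * s) ^ (-1 / 2 : ℝ) / (2 * s) ^ μ) *
        (Real.exp (x * y / (2 * s)) * Real.exp (-(x ^ 2 + y ^ 2) / (4 * s))) := by
        rw [Real.div_rpow (by positivity) (by positivity)]; ring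
    _ = _ := by
        rw [← Real.rpow_sub (by positivity), Real.mul_rpow (by norm_num) hs.le, ← Real.exp_add,
          show x * y / (2 * s) + -(x ^ 2 + y ^ 2) / (4 * s) = -((x - y) ^ 2 / (4 * s)) by
            field_simp; ring]
        ring

lemma exists_besselPoissonKernel_le_s10 {lam μ K : ℝ} (hlam : 0 < lam) (hμ : 0 ≤ μ) (hK0 : 0 < K)
    (hK : ∀ z : ℝ, 0 < z → √z * besselI (lam - 1 / 2) z ≤ K * (z ^ μ * Real.exp z)) :
    ∃ C : ℝ, 0 < C ∧ ∀ x y t : ℝ, 0 < x → 0 < y → 0 < t →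
      besselPoissonKernel lam t x y ≤
        C * (t * (x * y) ^ μ / (t + |x - y|) ^ (2 * (μ + 1))) := by
  have hG : 0 < Real.Gamma (μ + 1) := Real.Gamma_pos_of_pos (by linarith)
  refine ⟨1 / (2 * √π) * (K * 2 ^ (-1 / 2 - μ)) * (8 ^ (μ + 1) * Real.Gamma (μ + 1)),
    by positivity, fun x y t hx hy ht => ?_⟩
  set D := t + |x - y| with hD
  have hDpos : 0 < D := by positivity
  set a := (t ^ 2 + (x - y) ^ 2) / 4 with ha
  have hapos : 0 < a := by positivity
  have haD : 1 / a ≤ 8 / D ^ 2 := by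
    rw [div_le_div_iff₀ hapos (by positivity), ha, hD]
    nlinarith [sq_abs (x - y), sq_nonneg (t - |x - y|)]
  obtain ⟨hint, hval⟩ := integrableOn_rpow_mul_exp_neg_div_s10 hμ hapos
  set Q := K * 2 ^ (-1 / 2 - μ) * (x * y) ^ μ with hQ
  have hle : ∫ s in Ioi (0 : ℝ), s ^ (-(3 : ℝ) / 2) * Real.exp (-t ^ 2 / (4 * s)) *
      besselHeatKernel lam s x y
      ≤ ∫ s in Ioi (0 : ℝ), Q * (s ^ (-2 - μ) * Real.exp (-(a / s))) := by
    refine integral_mono_of_nonneg ?_ (hint.const_mul Q) ?_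
    · filter_upwards [ae_restrict_mem measurableSet_Ioi] with s hs
      have hs : 0 < s := hs
      have := besselI_nonneg hlam (show 0 < x * y / (2 * s) by positivity)
      simp only [besselHeatKernel, Pi.zero_apply]
      positivity
    · filter_upwards [ae_restrict_mem measurableSet_Ioi] with s hs
      have hs : 0 < s := hs
      calc _ ≤ s ^ (-(3 : ℝ) / 2) * Real.exp (-t ^ 2 / (4 * s)) *
            (Q * (s ^ (-1 / 2 - μ) * Real.exp (-((x - y) ^ 2 / (4 * s))))) := by
            gcongr; exact besselHeatKernel_le hK hs hx hy
        _ = Q * ((s ^ (-(3 : ℝ) / 2) * s ^ (-1 / 2 - μ)) *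
            (Real.exp (-t ^ 2 / (4 * s)) * Real.exp (-((x - y) ^ 2 / (4 * s))))) := by ring
        _ = _ := by
            rw [← Real.rpow_add hs, ← Real.exp_add,
              show -t ^ 2 / (4 * s) + -((x - y) ^ 2 / (4 * s)) = -(a / s) by
                rw [ha]; field_simp; ring]
            ring_nf
  rw [integral_const_mul, hval] at hle
  have hpow : (1 / a) ^ (μ + 1) ≤ 8 ^ (μ + 1) / D ^ (2 * (μ + 1)) := by
    rw [Real.rpow_mul hDpos.le, Real.rpow_two, ← Real.div_rpow (by norm_num) (by positivity)]
    gcongr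
  rw [besselPoissonKernel]
  calc _ ≤ t / (2 * √π) * (Q * (8 ^ (μ + 1) / D ^ (2 * (μ + 1)) * Real.Gamma (μ + 1))) := by
        gcongr
        exact hle.trans (by gcongr)
    _ = _ := by rw [hQ]; ring

/-- Size estimates for the Bessel–Poisson kernel. -/
theorem poisson_kernel_bounds (lam : ℝ) (hlam : 0 < lam) :
    ∃ C : ℝ, 0 < C ∧ ∀ x y t : ℝ, 0 < x → 0 < y → 0 < t →
      besselPoissonKernel lam t x y ≤
          C * (t / (t + |x - y|) ^ 2 * (min (min x y / (t + |x - y|)) 1) ^ lam) ∧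
      besselPoissonKernel lam t x y ≤
          C * (t * (x * y) ^ lam / (t + |x - y|) ^ (2 * (lam + 1))) := by
  obtain ⟨K₀, hK₀, H₀⟩ := exists_sqrt_mul_besselI_le_exp hlam
  obtain ⟨K₁, hK₁, H₁⟩ := exists_sqrt_mul_besselI_le_rpow hlam
  obtain ⟨C₀, hC₀, B₀⟩ := exists_besselPoissonKernel_le_s10 hlam le_rfl hK₀ (by simpa using H₀)
  obtain ⟨C₁, hC₁, B₁⟩ := exists_besselPoissonKernel_le_s10 hlam hlam.le hK₁ H₁
  refine ⟨C₀ + C₁ * 2 ^ lam, by positivity, fun x y t hx hy ht => ?_⟩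
  have b₀ := B₀ x y t hx hy ht
  have b₁ := B₁ x y t hx hy ht
  have h2 : (1 : ℝ) ≤ 2 ^ lam := Real.one_le_rpow (by norm_num) hlam.le
  set D := t + |x - y| with hD
  have hDpos : 0 < D := by positivity
  have hm : 0 < min x y := lt_min hx hy
  refine ⟨?_, b₁.trans ?_⟩
  · rcases le_total 1 (min x y / D) with h | h
    · rw [min_eq_right h, Real.one_rpow, mul_one]
      refine b₀.trans ?_
      simp only [Real.rpow_zero, mul_one, zero_add, Real.rpow_two]
      gcongr
      exact le_add_of_nonneg_right (by positivity)
    · rw [min_eq_left h]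
      have hmD : min x y ≤ D := (div_le_one hDpos).mp h
      have hxy : x * y ≤ 2 * (min x y * D) := by
        have hmax : max x y ≤ 2 * D := by
          have := max_sub_min_eq_abs x y
          rw [abs_sub_comm] at this
          linarith
        rw [← min_mul_max]
        nlinarith
      refine b₁.trans ?_
      calc _ ≤ C₁ * (t * (2 * (min x y * D)) ^ lam / D ^ (2 * (lam + 1))) := by gcongr
        _ = C₁ * 2 ^ lam * (t / D ^ 2 * (min x y / D) ^ lam) := by
          rw [Real.mul_rpow (by norm_num) (by positivity), Real.mul_rpow hm.le hDpos.le,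
            Real.div_rpow hm.le hDpos.le, show 2 * (lam + 1) = lam + lam + (2 : ℕ) by
              push_cast; ring, Real.rpow_add hDpos, Real.rpow_add hDpos, Real.rpow_natCast]
          field_simp
        _ ≤ _ := by
          gcongr
          exact le_add_of_nonneg_left hC₀.le
  · gcongr
    nlinarith
end
end
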